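/- arXiv:1205.5165 — 4 statements merged into one kernel-verified Lean document; each statement's English description precedes it below -/
import Mathlib

section
/- Let n ≥ 2 and let Ω ⊊ ℝⁿ be an exceptional domain with classical roof function u. Then for every a ∈ Ω, u(a) ≤ 2·dist(a, ∂Ω); in particular u(a) ≤ 2‖a‖ + C for a constant C depending only on Ω, so u grows at most linearly at infinity. -/
/-!
The inequality follows from the gradient bound `‖∇u‖ ≤ 2` on `Ω`: integrating along the segment
from `a` to a nearest boundary point, where `u` vanishes, gives `u a ≤ 2 * dist (a, ∂Ω)`.

To bound the gradient, rescale `u` to the largest ball around a point `a ∈ Ω`. This gives a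
nonnegative harmonic function `v` on the unit ball with the same gradient values as `u`, vanishing
at a point `z` of the unit sphere where the gradient has norm `1` (`UnitRoof`,
`unitRoof_rescale`). Comparison with the barrier `c (exp (α (1 - ‖y‖²)) - 1)` shows that such a
function cannot be large on a sphere of radius `ρ < 1`: if `v ≥ m` there, then the slope of `v` at
`z` is at least `2 α m / (exp (α (1 - ρ²)) - 1)`, while it is at most `1` (`hopf_bound`).

* With `ρ = 1 / 4`, Harnack's inequality and the interior gradient estimate turn this into a bound
  on `‖∇v(0)‖` depending only on `n` (`UnitRoof.exists_bound`). Hence `M = sup ‖∇u‖` is finite.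
* Choose `a` with `‖∇u(a)‖` very close to `M`, and a direction `e` almost attaining this norm.
  The function `M - ∂ₑ v` is nonnegative, harmonic and very small at `0`, hence small on a ball of
  radius close to `1` (`UnitRoof.deriv_harnack`), so `v` has slope at least `7 M / 8` in the
  direction `e` there. Since `v ≥ 0`, `v` is at least about `M (1 - ρ)` on the sphere of radius
  `ρ`. As `ρ` tends to `1` the Hopf bound becomes `m ≤ (1 - ρ) (1 + o(1))`, and a fixed
  `ρ` close to `1` already yields `M ≤ 2` (`UnitRoof.le_two`).

Harnack's inequality and the gradient estimate come from a solid mean value formula with weight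
`(1 - ‖y‖²)₊²` (`mean_value`). With this weight the derivative of the mean in the radius is the
integral of the Laplacian against a compactly supported `C¹` potential, so only integration by
parts on the whole space is needed and no surface integrals occur.
-/

open Metric Set

/-- The Laplacian of a function on Euclidean space, as a sum of second directional
derivatives along the standard basis vectors. -/
noncomputable def lapE {n : ℕ} (u : EuclideanSpace ℝ (Fin n) → ℝ)
    (x : EuclideanSpace ℝ (Fin n)) : ℝ :=
  ∑ i : Fin n,
    fderiv ℝ (fun y => fderiv ℝ u y (EuclideanSpace.single i (1 : ℝ))) x
      (EuclideanSpace.single i (1 : ℝ))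

/-- `u` is harmonic on `s`: twice continuously differentiable with vanishing Laplacian. -/
def HarmonicOnE {n : ℕ} (u : EuclideanSpace ℝ (Fin n) → ℝ)
    (s : Set (EuclideanSpace ℝ (Fin n))) : Prop :=
  (∀ x ∈ s, ContDiffAt ℝ 2 u x) ∧ ∀ x ∈ s, lapE u x = 0

/-- `u` is a classical roof function for `Ω`: continuous on the closure, harmonic and
positive in `Ω`, vanishing on `∂Ω`, continuously differentiable up to the boundary
(witnessed by a continuous extension `G` of the differential) with `‖∇u‖ = 1` on `∂Ω`. -/
def IsRoofFunctionE {n : ℕ} (Ω : Set (EuclideanSpace ℝ (Fin n)))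
    (u : EuclideanSpace ℝ (Fin n) → ℝ) : Prop :=
  ContinuousOn u (closure Ω) ∧
  HarmonicOnE u Ω ∧
  (∀ x ∈ Ω, 0 < u x) ∧
  (∀ x ∈ frontier Ω, u x = 0) ∧
  ∃ G : EuclideanSpace ℝ (Fin n) → (EuclideanSpace ℝ (Fin n) →L[ℝ] ℝ),
    ContinuousOn G (closure Ω) ∧ (∀ x ∈ Ω, G x = fderiv ℝ u x) ∧
    ∀ x ∈ frontier Ω, ‖G x‖ = 1

open MeasureTheory Filter Topology

/-! ### Calculus of the Laplacian -/

section Laplacian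

variable {n : ℕ}

local notation "𝔼" n => EuclideanSpace ℝ (Fin n)

lemma differentiableAt_fderiv_apply {u : (𝔼 n) → ℝ} {x : 𝔼 n} (h : ContDiffAt ℝ 2 u x)
    (v : 𝔼 n) : DifferentiableAt ℝ (fun y => fderiv ℝ u y v) x := by
  have h1 : ContDiffAt ℝ 1 (fderiv ℝ u) x := h.fderiv_right (by norm_num)
  exact (h1.differentiableAt (by norm_num)).clm_apply (differentiableAt_const v)

lemma eventually_differentiableAt {u : (𝔼 n) → ℝ} {x : 𝔼 n} (h : ContDiffAt ℝ 2 u x) :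
    ∀ᶠ y in 𝓝 x, DifferentiableAt ℝ u y := by
  filter_upwards [h.eventually (by simp)] with y hy
  exact hy.differentiableAt (by norm_num)

lemma lapE_congr {f g : (𝔼 n) → ℝ} {x : 𝔼 n} (h : f =ᶠ[𝓝 x] g) : lapE f x = lapE g x := by
  unfold lapE
  refine Finset.sum_congr rfl fun i _ => ?_
  have : (fun y => fderiv ℝ f y (EuclideanSpace.single i (1 : ℝ))) =ᶠ[𝓝 x]
      (fun y => fderiv ℝ g y (EuclideanSpace.single i (1 : ℝ))) := by
    filter_upwards [h.fderiv (𝕜 := ℝ)] with y hy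
    rw [hy]
  rw [this.fderiv_eq]

lemma lapE_sub {f g : (𝔼 n) → ℝ} {x : 𝔼 n} (hf : ContDiffAt ℝ 2 f x) (hg : ContDiffAt ℝ 2 g x) :
    lapE (fun y => f y - g y) x = lapE f x - lapE g x := by
  unfold lapE
  rw [← Finset.sum_sub_distrib]
  refine Finset.sum_congr rfl fun i _ => ?_
  have : (fun y => fderiv ℝ (fun y => f y - g y) y (EuclideanSpace.single i (1 : ℝ))) =ᶠ[𝓝 x]
      (fun y => fderiv ℝ f y (EuclideanSpace.single i (1 : ℝ)) -
        fderiv ℝ g y (EuclideanSpace.single i (1 : ℝ))) := by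
    filter_upwards [eventually_differentiableAt hf, eventually_differentiableAt hg] with y h1 h2
    rw [fderiv_fun_sub h1 h2]; rfl
  rw [this.fderiv_eq, fderiv_fun_sub (differentiableAt_fderiv_apply hf _)
    (differentiableAt_fderiv_apply hg _)]
  rfl

lemma lapE_const (c : ℝ) (x : 𝔼 n) : lapE (fun _ => c) x = 0 := by
  simp [lapE]

lemma fderiv_affine {u : (𝔼 n) → ℝ} (a : 𝔼 n) (R c : ℝ) (x : 𝔼 n)
    (h : DifferentiableAt ℝ u (a + R • x)) :
    fderiv ℝ (fun y => c * u (a + R • y)) x = (c * R) • fderiv ℝ u (a + R • x) := by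
  have h1 : HasFDerivAt (fun y : 𝔼 n => a + R • y) (R • ContinuousLinearMap.id ℝ (𝔼 n)) x :=
    ((hasFDerivAt_id x).const_smul R).const_add a
  have h2 := (h.hasFDerivAt.comp x h1).const_mul c
  have h3 : (c * R) • fderiv ℝ u (a + R • x) =
      c • (fderiv ℝ u (a + R • x)).comp (R • ContinuousLinearMap.id ℝ (𝔼 n)) := by
    ext v
    simp [mul_assoc]
  rw [h3]
  exact h2.fderiv

lemma contDiffAt_affine {u : (𝔼 n) → ℝ} (a : 𝔼 n) (R c : ℝ) (x : 𝔼 n)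
    (h : ContDiffAt ℝ 2 u (a + R • x)) : ContDiffAt ℝ 2 (fun y => c * u (a + R • y)) x := by
  refine contDiffAt_const.mul ?_
  exact ContDiffAt.comp x h (by fun_prop)

lemma lapE_affine {u : (𝔼 n) → ℝ} (a : 𝔼 n) (R c : ℝ) (x : 𝔼 n)
    (h : ContDiffAt ℝ 2 u (a + R • x)) :
    lapE (fun y => c * u (a + R • y)) x = c * R ^ 2 * lapE u (a + R • x) := by
  unfold lapE
  rw [Finset.mul_sum]
  refine Finset.sum_congr rfl fun i _ => ?_
  have hc : Tendsto (fun y : 𝔼 n => a + R • y) (𝓝 x) (𝓝 (a + R • x)) :=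
    Continuous.tendsto (by fun_prop) x
  have : (fun y => fderiv ℝ (fun y => c * u (a + R • y)) y (EuclideanSpace.single i (1 : ℝ)))
      =ᶠ[𝓝 x] (fun y => (c * R) *
        (fun z => fderiv ℝ u z (EuclideanSpace.single i (1 : ℝ))) (a + R • y)) := by
    filter_upwards [hc.eventually (eventually_differentiableAt h)] with y h1
    rw [fderiv_affine a R c y h1]; rfl
  rw [this.fderiv_eq, fderiv_affine a R (c * R) x (differentiableAt_fderiv_apply h _)]
  rw [smul_apply, smul_eq_mul]
  ring

/-- Second derivative test: at a local maximum the Laplacian is not positive. -/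
lemma lapE_nonpos_of_isLocalMax {f : (𝔼 n) → ℝ} {x : 𝔼 n} (hf : ContDiffAt ℝ 2 f x)
    (hm : IsLocalMax f x) : lapE f x ≤ 0 := by
  unfold lapE
  refine Finset.sum_nonpos fun i _ => ?_
  set e : 𝔼 n := EuclideanSpace.single i (1 : ℝ)
  by_contra! hpos
  set g : ℝ → ℝ := fun s => f (x + s • e)
  have hline : ∀ s : ℝ, HasDerivAt (fun s : ℝ => x + s • e) e s := fun s => by
    simpa using ((hasDerivAt_id s).smul_const e).const_add x
  have hc : Tendsto (fun s : ℝ => x + s • e) (𝓝 0) (𝓝 x) := by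
    have : Continuous (fun s : ℝ => x + s • e) := by fun_prop
    simpa using this.tendsto 0
  have hd : deriv g =ᶠ[𝓝 0] fun s => fderiv ℝ f (x + s • e) e := by
    filter_upwards [hc.eventually (eventually_differentiableAt hf)] with s hs
    exact (hs.hasFDerivAt.comp_hasDerivAt s (hline s)).deriv
  have hdd : deriv (deriv g) 0 = fderiv ℝ (fun y => fderiv ℝ f y e) x e := by
    rw [hd.deriv_eq]
    have h0 : HasFDerivAt (fun y => fderiv ℝ f y e) (fderiv ℝ (fun y => fderiv ℝ f y e) x)
        (x + (0 : ℝ) • e) := by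
      simpa using (differentiableAt_fderiv_apply hf e).hasFDerivAt
    exact (h0.comp_hasDerivAt (0 : ℝ) (hline 0)).deriv
  have hmax : IsLocalMax g 0 := by
    have : ∀ᶠ s in 𝓝 (0 : ℝ), f (x + s • e) ≤ f x := hc.eventually hm
    simpa [IsLocalMax, IsMaxFilter, g] using this
  have hcont : ContinuousAt g 0 := by
    have : ContinuousAt f (x + (0 : ℝ) • e) := by simpa using hf.continuousAt
    exact ContinuousAt.comp (f := fun s : ℝ => x + s • e) this (hline 0).continuousAt
  have hmin := isLocalMin_of_deriv_deriv_pos (hdd ▸ hpos) hmax.deriv_eq_zero hcont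
  have hconst : g =ᶠ[𝓝 0] fun _ => g 0 := by
    filter_upwards [hmax, hmin] with s h1 h2
    exact le_antisymm h1 h2
  have : deriv (deriv g) 0 = 0 := by
    have := hconst.deriv.deriv_eq
    simpa using this
  rw [hdd] at this
  exact hpos.ne' this

end Laplacian

/-! ### The weighted solid mean value formula -/

section MeanValue

variable {n : ℕ}

local notation "𝔼" n => EuclideanSpace ℝ (Fin n)

/-- The radial weight `(1 - ‖y‖²)₊²` used in the solid mean value formula. -/
noncomputable def wt (y : 𝔼 n) : ℝ := (max (1 - ‖y‖ ^ 2) 0) ^ 2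

/-- The potential `-(1 - ‖y‖²)₊³ / 6`, whose gradient is `wt y • y`. -/
noncomputable def pot (y : 𝔼 n) : ℝ := -(1 / 6) * (max (1 - ‖y‖ ^ 2) 0) ^ 3

lemma continuous_wt : Continuous (wt : (𝔼 n) → ℝ) := by
  unfold wt; fun_prop

lemma wt_nonneg (y : 𝔼 n) : 0 ≤ wt y := sq_nonneg _

lemma wt_eq_zero {y : 𝔼 n} (h : 1 ≤ ‖y‖) : wt y = 0 := by
  have : 1 - ‖y‖ ^ 2 ≤ 0 := by nlinarith
  simp [wt, max_eq_right this]

lemma pot_eq_zero {y : 𝔼 n} (h : 1 ≤ ‖y‖) : pot y = 0 := by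
  have : 1 - ‖y‖ ^ 2 ≤ 0 := by nlinarith
  simp [pot, max_eq_right this]

lemma wt_le_one (y : 𝔼 n) : wt y ≤ 1 := by
  have h1 : max (1 - ‖y‖ ^ 2) 0 ≤ 1 := max_le (by nlinarith [sq_nonneg ‖y‖]) zero_le_one
  have h0 : 0 ≤ max (1 - ‖y‖ ^ 2) 0 := le_max_right _ _
  unfold wt; nlinarith

lemma abs_wt_sub_le (p q : 𝔼 n) : |wt p - wt q| ≤ 2 * (‖p - q‖ * (‖p‖ + ‖q‖)) := by
  set a := max (1 - ‖p‖ ^ 2) 0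
  set b := max (1 - ‖q‖ ^ 2) 0
  have ha1 : a ≤ 1 := max_le (by nlinarith [sq_nonneg ‖p‖]) zero_le_one
  have ha0 : 0 ≤ a := le_max_right _ _
  have hb1 : b ≤ 1 := max_le (by nlinarith [sq_nonneg ‖q‖]) zero_le_one
  have hb0 : 0 ≤ b := le_max_right _ _
  have hab : |a - b| ≤ |(1 - ‖p‖ ^ 2) - (1 - ‖q‖ ^ 2)| := abs_max_sub_max_le_abs _ _ _
  have h2 : (1 - ‖p‖ ^ 2) - (1 - ‖q‖ ^ 2) = (‖q‖ - ‖p‖) * (‖p‖ + ‖q‖) := by ring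
  have h3 : |‖q‖ - ‖p‖| ≤ ‖p - q‖ := by
    rw [norm_sub_rev]; exact abs_norm_sub_norm_le q p
  have hs : 0 ≤ ‖p‖ + ‖q‖ := by positivity
  rw [h2, abs_mul, abs_of_nonneg hs] at hab
  have h4 : wt p - wt q = (a - b) * (a + b) := by simp only [wt, a, b]; ring
  rw [h4, abs_mul, abs_of_nonneg (by positivity : 0 ≤ a + b)]
  calc |a - b| * (a + b) ≤ (‖p - q‖ * (‖p‖ + ‖q‖)) * 2 := by
        refine mul_le_mul (hab.trans ?_) (by linarith) (by positivity) (by positivity)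
        gcongr
    _ = _ := by ring

lemma hasCompactSupport_wt : HasCompactSupport (wt : (𝔼 n) → ℝ) :=
  HasCompactSupport.intro (isCompact_closedBall (0 : 𝔼 n) 1) fun y hy => wt_eq_zero (by
    simp at hy; exact hy.le)

lemma hasCompactSupport_pot : HasCompactSupport (pot : (𝔼 n) → ℝ) :=
  HasCompactSupport.intro (isCompact_closedBall (0 : 𝔼 n) 1) fun y hy => pot_eq_zero (by
    simp at hy; exact hy.le)

lemma integral_wt_pos : 0 < ∫ y : 𝔼 n, wt y := by
  refine (integral_pos_iff_support_of_nonneg wt_nonneg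
    (continuous_wt.integrable_of_hasCompactSupport hasCompactSupport_wt)).2 ?_
  refine IsOpen.measure_pos _ (continuous_wt.isOpen_support) ⟨0, ?_⟩
  simp [wt]

lemma hasDerivAt_max_cube (s : ℝ) :
    HasDerivAt (fun s : ℝ => (max s 0) ^ 3) (3 * (max s 0) ^ 2) s := by
  rcases lt_trichotomy s 0 with h | h | h
  · rw [max_eq_right h.le]
    have : (fun s : ℝ => (max s 0) ^ 3) =ᶠ[𝓝 s] fun _ => 0 := by
      filter_upwards [Iio_mem_nhds h] with y hy
      rw [max_eq_right (le_of_lt hy)]; norm_num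
    simpa using (hasDerivAt_const s (0 : ℝ)).congr_of_eventuallyEq this
  · subst h
    simp only [max_self, ne_eq, OfNat.ofNat_ne_zero, not_false_eq_true, zero_pow, mul_zero]
    rw [hasDerivAt_iff_isLittleO]
    simp only [max_self, ne_eq, OfNat.ofNat_ne_zero, not_false_eq_true, zero_pow, sub_zero,
      smul_eq_mul, mul_zero]
    have h1 : (fun x : ℝ => (max x 0) ^ 3) =O[𝓝 0] fun x : ℝ => x ^ 3 := by
      refine Asymptotics.IsBigO.of_bound 1 (Eventually.of_forall fun x => ?_)
      rw [one_mul, norm_pow, norm_pow]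
      gcongr
      rw [Real.norm_eq_abs, Real.norm_eq_abs, abs_of_nonneg (le_max_right _ _)]
      exact max_le (le_abs_self x) (abs_nonneg x)
    have h2 : (fun x : ℝ => x ^ 3) =o[𝓝 0] fun x : ℝ => x := by
      simpa using Asymptotics.isLittleO_pow_id (𝕜 := ℝ) (n := 3) (by norm_num)
    exact h1.trans_isLittleO h2
  · rw [max_eq_left h.le]
    have : (fun s : ℝ => (max s 0) ^ 3) =ᶠ[𝓝 s] fun y => y ^ 3 := by
      filter_upwards [Ioi_mem_nhds h] with y hy
      rw [max_eq_left (le_of_lt hy)]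
    simpa using (hasDerivAt_pow 3 s).congr_of_eventuallyEq this

lemma hasFDerivAt_pot (y : 𝔼 n) : HasFDerivAt pot (wt y • innerSL ℝ y) y := by
  have h1 : HasFDerivAt (fun y : 𝔼 n => 1 - ‖y‖ ^ 2) (-(2 • innerSL ℝ y)) y :=
    (hasStrictFDerivAt_norm_sq y).hasFDerivAt.const_sub 1
  have h2 := ((hasDerivAt_max_cube (1 - ‖y‖ ^ 2)).comp_hasFDerivAt y h1).const_mul (-(1 / 6))
  have h3 : wt y • innerSL ℝ y =
      (-(1 / 6) : ℝ) • ((3 * (max (1 - ‖y‖ ^ 2) 0) ^ 2) • (-(2 • innerSL ℝ y))) := by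
    ext v
    simp [wt]; ring
  rw [h3]
  exact h2

lemma differentiable_pot : Differentiable ℝ (pot : (𝔼 n) → ℝ) :=
  fun y => (hasFDerivAt_pot y).differentiableAt

lemma fderiv_pot_single (y : 𝔼 n) (i : Fin n) :
    fderiv ℝ pot y (EuclideanSpace.single i (1 : ℝ)) = wt y * y i := by
  rw [(hasFDerivAt_pot y).fderiv]
  simp [EuclideanSpace.inner_single_right]

lemma apply_eq_sum_single (L : (𝔼 n) →L[ℝ] ℝ) (y : 𝔼 n) :
    L y = ∑ i, y i * L (EuclideanSpace.single i (1 : ℝ)) := by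
  have h := (EuclideanSpace.basisFun (Fin n) ℝ).sum_repr y
  conv_lhs => rw [← h]
  simp

/-- Integration by parts: the radial derivative of a harmonic function has vanishing weighted
integral, because `wt y • y` is a gradient. -/
lemma integral_radial_eq_zero {g : (𝔼 n) → ℝ} (hg : ContDiff ℝ 2 g)
    (hh : ∀ y ∈ closedBall (0 : 𝔼 n) 1, lapE g y = 0) :
    ∫ y, fderiv ℝ g y y * wt y = 0 := by
  have hD : ∀ v, Continuous fun y => fderiv ℝ g y v := fun v =>
    (hg.continuous_fderiv (by norm_num)).clm_apply continuous_const
  have hDD : ∀ v, Continuous fun y => fderiv ℝ (fun z => fderiv ℝ g z v) y v := fun v => by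
    have : ContDiff ℝ 1 (fun z => fderiv ℝ g z v) :=
      (hg.fderiv_right (m := 1) (by norm_num)).clm_apply contDiff_const
    exact (this.continuous_fderiv (by norm_num)).clm_apply continuous_const
  have hcp : Continuous (pot : (𝔼 n) → ℝ) := differentiable_pot.continuous
  have i1 : ∀ i : Fin n, Integrable (fun y => fderiv ℝ g y (EuclideanSpace.single i (1 : ℝ)) *
      fderiv ℝ pot y (EuclideanSpace.single i (1 : ℝ))) := fun i => by
    simp only [fderiv_pot_single]
    refine Continuous.integrable_of_hasCompactSupport ?_ ?_
    · exact (hD _).mul (continuous_wt.mul (by fun_prop))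
    · exact (hasCompactSupport_wt.mul_right).mul_left
  have i2 : ∀ i : Fin n, Integrable (fun y => fderiv ℝ (fun z => fderiv ℝ g z
      (EuclideanSpace.single i (1 : ℝ))) y (EuclideanSpace.single i (1 : ℝ)) * pot y) := fun i =>
    Continuous.integrable_of_hasCompactSupport ((hDD _).mul hcp) hasCompactSupport_pot.mul_left
  have i3 : ∀ i : Fin n, Integrable (fun y => fderiv ℝ g y (EuclideanSpace.single i (1 : ℝ)) *
      pot y) := fun i =>
    Continuous.integrable_of_hasCompactSupport ((hD _).mul hcp) hasCompactSupport_pot.mul_left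
  have hpart : ∀ i : Fin n, ∫ y, fderiv ℝ g y (EuclideanSpace.single i (1 : ℝ)) *
      fderiv ℝ pot y (EuclideanSpace.single i (1 : ℝ)) =
      - ∫ y, fderiv ℝ (fun z => fderiv ℝ g z
      (EuclideanSpace.single i (1 : ℝ))) y (EuclideanSpace.single i (1 : ℝ)) * pot y := fun i =>
    integral_mul_fderiv_eq_neg_fderiv_mul_of_integrable (i2 i) (i1 i) (i3 i)
      (fun x _ => differentiableAt_fderiv_apply hg.contDiffAt _) (fun x _ => differentiable_pot x)
  calc ∫ y, fderiv ℝ g y y * wt y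
      = ∫ y, ∑ i, fderiv ℝ g y (EuclideanSpace.single i (1 : ℝ)) *
          fderiv ℝ pot y (EuclideanSpace.single i (1 : ℝ)) := by
        congr 1; ext y
        rw [apply_eq_sum_single (fderiv ℝ g y) y, Finset.sum_mul]
        refine Finset.sum_congr rfl fun i _ => ?_
        rw [fderiv_pot_single]; ring
    _ = -∫ y, lapE g y * pot y := by
        rw [integral_finsetSum _ fun i _ => i1 i]
        simp only [hpart, Finset.sum_neg_distrib]
        rw [← integral_finsetSum _ fun i _ => i2 i]
        simp only [lapE, Finset.sum_mul]
    _ = 0 := by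
        have : ∀ y : 𝔼 n, lapE g y * pot y = 0 := fun y => by
          by_cases hy : y ∈ closedBall (0 : 𝔼 n) 1
          · rw [hh y hy, zero_mul]
          · rw [pot_eq_zero (by simp at hy; exact hy.le), mul_zero]
        simp [this]

/-- The weighted mean of `g` over the ball of radius `τ` has derivative zero in `τ` by
`integral_radial_eq_zero`, so it equals its value at `τ = 0`. -/
lemma mean_value_global {g : (𝔼 n) → ℝ} (hg : ContDiff ℝ 2 g) {x : 𝔼 n} {t : ℝ} (ht : 0 < t)
    (hh : ∀ y ∈ closedBall x t, lapE g y = 0) :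
    ∫ y, g (x + t • y) * wt y = g x * ∫ y : 𝔼 n, wt y := by
  set F : ℝ → ℝ := fun τ => ∫ y, g (x + τ • y) * wt y
  have hgd : ∀ z, HasFDerivAt g (fderiv ℝ g z) z := fun z =>
    (hg.differentiable (by norm_num) z).hasFDerivAt
  have hgc : Continuous (fderiv ℝ g) := hg.continuous_fderiv (by norm_num)
  obtain ⟨K, hK⟩ := (isCompact_closedBall x (t + 1)).exists_bound_of_continuousOn hgc.continuousOn
  have hF : ∀ τ ∈ Icc 0 t, HasDerivAt F (∫ y, fderiv ℝ g (x + τ • y) y * wt y) τ := by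
    intro τ hτ
    refine (hasDerivAt_integral_of_dominated_loc_of_deriv_le (μ := volume)
      (F := fun τ y => g (x + τ • y) * wt y) (F' := fun τ y => fderiv ℝ g (x + τ • y) y * wt y)
      (bound := fun y => K * wt y) (s := ball τ 1) (ball_mem_nhds _ one_pos) ?_ ?_ ?_ ?_ ?_ ?_).2
    · refine Eventually.of_forall fun σ => Continuous.aestronglyMeasurable ?_
      exact (hg.continuous.comp (by fun_prop)).mul continuous_wt
    · exact Continuous.integrable_of_hasCompactSupport
        ((hg.continuous.comp (by fun_prop)).mul continuous_wt) hasCompactSupport_wt.mul_left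
    · refine Continuous.aestronglyMeasurable ?_
      exact ((hgc.comp (by fun_prop)).clm_apply continuous_id).mul continuous_wt
    · refine Eventually.of_forall fun y σ hσ => ?_
      by_cases hy : 1 ≤ ‖y‖
      · simp [wt_eq_zero hy]
      · push Not at hy
        rw [norm_mul, Real.norm_of_nonneg (wt_nonneg y)]
        gcongr
        · exact wt_nonneg y
        have hσ' : |σ| ≤ t + 1 := by
          rw [mem_ball, Real.dist_eq] at hσ
          have := abs_lt.1 hσ
          rw [abs_le]; constructor <;> linarith [hτ.1, hτ.2]
        have hmem : x + σ • y ∈ closedBall x (t + 1) := by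
          rw [mem_closedBall, dist_eq_norm, add_sub_cancel_left, norm_smul, Real.norm_eq_abs]
          calc |σ| * ‖y‖ ≤ (t + 1) * 1 := by gcongr
            _ = t + 1 := mul_one _
        calc ‖fderiv ℝ g (x + σ • y) y‖ ≤ ‖fderiv ℝ g (x + σ • y)‖ * ‖y‖ :=
              ContinuousLinearMap.le_opNorm _ _
          _ ≤ K * 1 := by
              gcongr
              · exact (norm_nonneg _).trans (hK _ hmem)
              · exact hK _ hmem
          _ = K := mul_one _
    · exact (continuous_wt.integrable_of_hasCompactSupport hasCompactSupport_wt).const_mul K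
    · refine Eventually.of_forall fun y σ _ => ?_
      have hl : HasDerivAt (fun s : ℝ => x + s • y) y σ := by
        simpa using ((hasDerivAt_id σ).smul_const y).const_add x
      exact ((hgd (x + σ • y)).comp_hasDerivAt σ hl).mul_const (wt y)
  have hzero : ∀ τ ∈ Ioo 0 t, ∫ y, fderiv ℝ g (x + τ • y) y * wt y = 0 := by
    intro τ hτ
    have hg' : ContDiff ℝ 2 (fun y => 1 * g (x + τ • y)) :=
      contDiff_const.mul (hg.comp (by fun_prop))
    have h0 := integral_radial_eq_zero hg' (fun y hy => by
      rw [lapE_affine x τ 1 y hg.contDiffAt, hh, mul_zero]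
      rw [mem_closedBall_zero_iff] at hy
      rw [mem_closedBall, dist_eq_norm, add_sub_cancel_left, norm_smul,
        Real.norm_of_nonneg hτ.1.le]
      nlinarith [hτ.1, hτ.2])
    have h1 : ∀ y, fderiv ℝ (fun y => 1 * g (x + τ • y)) y y * wt y =
        τ * (fderiv ℝ g (x + τ • y) y * wt y) := fun y => by
      rw [fderiv_affine x τ 1 y (hgd _).differentiableAt]
      simp; ring
    simp only [h1, integral_const_mul] at h0
    exact (mul_eq_zero.1 h0).resolve_left hτ.1.ne'
  have hconst : F t = F 0 := by
    obtain ⟨c, hc, hc'⟩ := exists_hasDerivAt_eq_slope F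
      (fun τ => ∫ y, fderiv ℝ g (x + τ • y) y * wt y) ht
      (fun τ hτ => (hF τ hτ).continuousAt.continuousWithinAt)
      (fun τ hτ => hF τ (Ioo_subset_Icc_self hτ))
    simp only [hzero c hc, sub_zero] at hc'
    have := (div_eq_zero_iff.1 hc'.symm).resolve_right ht.ne'
    linarith
  have h0 : F 0 = g x * ∫ y : 𝔼 n, wt y := by
    simp [F, integral_const_mul]
  rw [← h0, ← hconst]

/-- Multiplying by a smooth cutoff turns a function harmonic near a closed ball into a globally
`C²` function that agrees with it on the ball. -/
lemma exists_global_extension {w : (𝔼 n) → ℝ} {U : Set (𝔼 n)} (hU : IsOpen U)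
    (hw : HarmonicOnE w U) {x : 𝔼 n} {t : ℝ} (ht : 0 < t) (hs : closedBall x t ⊆ U) :
    ∃ g : (𝔼 n) → ℝ, ContDiff ℝ 2 g ∧ ∀ y ∈ closedBall x t, g y = w y ∧ lapE g y = 0 := by
  obtain ⟨δ, hδ, hδU⟩ := (isCompact_closedBall x t).exists_cthickening_subset_open hU hs
  rw [cthickening_closedBall hδ.le ht.le] at hδU
  let f : ContDiffBump x := ⟨t + δ / 3, t + δ / 2, by positivity, by linarith⟩
  refine ⟨fun y => f y * w y, ?_, ?_⟩
  · rw [contDiff_iff_contDiffAt]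
    intro y
    by_cases hy : y ∈ U
    · exact f.contDiffAt.mul (hw.1 y hy)
    · have hy' : y ∉ tsupport f := fun h => hy (hδU (by
        rw [f.tsupport_eq] at h
        exact closedBall_subset_closedBall (by change t + δ / 2 ≤ _; linarith) h))
      have : (fun y => f y * w y) =ᶠ[𝓝 y] fun _ => 0 := by
        filter_upwards [notMem_tsupport_iff_eventuallyEq.1 hy'] with z hz
        rw [hz]; simp
      exact contDiffAt_const.congr_of_eventuallyEq this
  · intro y hy
    have h1 : f =ᶠ[𝓝 y] 1 := f.eventuallyEq_one_of_mem_ball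
      (closedBall_subset_ball (by change t < t + δ / 3; linarith) hy)
    have h2 : (fun y => f y * w y) =ᶠ[𝓝 y] w := by
      filter_upwards [h1] with z hz
      rw [hz]; simp
    exact ⟨h2.eq_of_nhds, (lapE_congr h2).trans (hw.2 y (hs hy))⟩

/-- Solid mean value formula with weight `wt` over the ball of radius `t` around `x`. -/
lemma mean_value {w : (𝔼 n) → ℝ} {U : Set (𝔼 n)} (hU : IsOpen U)
    (hw : HarmonicOnE w U) {x : 𝔼 n} {t : ℝ} (ht : 0 < t) (hs : closedBall x t ⊆ U) :
    Integrable (fun z => w z * wt (t⁻¹ • (z - x))) ∧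
    ∫ z, w z * wt (t⁻¹ • (z - x)) = t ^ n * (w x * ∫ y : 𝔼 n, wt y) := by
  obtain ⟨g, hg, hgw⟩ := exists_global_extension hU hw ht hs
  have hz0 : ∀ z, z ∉ closedBall x t → wt (t⁻¹ • (z - x)) = 0 := fun z hz => by
    refine wt_eq_zero ?_
    rw [mem_closedBall, dist_eq_norm, not_le] at hz
    rw [norm_smul, norm_inv, Real.norm_of_nonneg ht.le, ← div_eq_inv_mul, one_le_div ht]
    exact hz.le
  have heq : (fun z => w z * wt (t⁻¹ • (z - x))) = fun z => g z * wt (t⁻¹ • (z - x)) := by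
    ext z
    by_cases hz : z ∈ closedBall x t
    · rw [(hgw z hz).1]
    · rw [hz0 z hz]; simp
  rw [heq]
  constructor
  · refine Continuous.integrable_of_hasCompactSupport
      (hg.continuous.mul (continuous_wt.comp (by fun_prop))) ?_
    exact HasCompactSupport.intro (isCompact_closedBall x t) fun z hz => by rw [hz0 z hz, mul_zero]
  · have h1 := mean_value_global hg ht fun y hy => (hgw y hy).2
    rw [(hgw x (mem_closedBall_self ht.le)).1] at h1
    rw [← h1]
    have h2 := Measure.integral_comp_inv_smul_of_nonneg (volume : Measure (𝔼 n))
      (fun y => g (x + t • y) * wt y) ht.le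
    have h3 := integral_sub_right_eq_self (μ := (volume : Measure (𝔼 n)))
      (fun z => g (x + t • (t⁻¹ • z)) * wt (t⁻¹ • z)) x
    rw [h2] at h3
    simp only [smul_smul, mul_inv_cancel₀ ht.ne', one_smul, add_sub_cancel,
      finrank_euclideanSpace, Fintype.card_fin, smul_eq_mul] at h3
    simpa [smul_smul] using h3

end MeanValue

/-! ### Harnack inequality and gradient estimate -/

section Harnack

variable {n : ℕ}

local notation "𝔼" n => EuclideanSpace ℝ (Fin n)

/-- Upper Harnack inequality: the value at the centre of a ball controls a nonnegative harmonic
function on smaller balls. The bump around `x` is dominated by the one around the centre `a`. -/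
lemma harnack_upper (n : ℕ) {ρ s : ℝ} (hρ : 0 ≤ ρ) (hs : ρ < s) :
    ∃ C : ℝ, 1 ≤ C ∧ ∀ (w : (𝔼 n) → ℝ) (U : Set (𝔼 n)) (a : 𝔼 n), IsOpen U → HarmonicOnE w U →
      closedBall a s ⊆ U → (∀ y ∈ closedBall a s, 0 ≤ w y) →
      ∀ x ∈ closedBall a ρ, w x ≤ C * w a := by
  set t := (s - ρ) / 2 with ht_def
  have ht : 0 < t := by rw [ht_def]; linarith
  have hs0 : 0 < s := by linarith
  set q := (ρ + s) / 2 with hq_def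
  have hq0 : 0 < q := by rw [hq_def]; linarith
  have hqs : q < s := by rw [hq_def]; linarith
  set b := (1 - (s⁻¹ * q) ^ 2) ^ 2 with hb_def
  have hsq1 : s⁻¹ * q < 1 := by rw [inv_mul_lt_one₀ hs0]; exact hqs
  have hsq0 : 0 < s⁻¹ * q := by positivity
  have hb0' : 0 < 1 - (s⁻¹ * q) ^ 2 := by nlinarith
  have hb : 0 < b := by positivity
  refine ⟨max 1 (b⁻¹ * s ^ n / t ^ n), le_max_left _ _, ?_⟩
  intro w U a hU hw hsub hnn x hx
  have hxt : closedBall x t ⊆ closedBall a q := by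
    refine closedBall_subset_closedBall' ?_
    rw [mem_closedBall] at hx
    rw [hq_def, ht_def]; linarith
  have hqs' : closedBall a q ⊆ closedBall a s := closedBall_subset_closedBall hqs.le
  obtain ⟨i1, e1⟩ := mean_value hU hw ht (hxt.trans (hqs'.trans hsub))
  obtain ⟨i2, e2⟩ := mean_value hU hw hs0 hsub
  have hle : ∫ z, w z * wt (t⁻¹ • (z - x)) ≤ ∫ z, b⁻¹ * (w z * wt (s⁻¹ • (z - a))) := by
    refine integral_mono i1 (i2.const_mul _) fun z => ?_
    by_cases hz : z ∈ closedBall x t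
    · have hza := hxt hz
      have hwz := hnn z (hqs' hza)
      have h1 : b ≤ wt (s⁻¹ • (z - a)) := by
        rw [mem_closedBall, dist_eq_norm] at hza
        have hnorm : ‖s⁻¹ • (z - a)‖ ≤ s⁻¹ * q := by
          rw [norm_smul, norm_inv, Real.norm_of_nonneg hs0.le]
          gcongr
        have : 1 - (s⁻¹ * q) ^ 2 ≤ max (1 - ‖s⁻¹ • (z - a)‖ ^ 2) 0 := by
          refine le_trans ?_ (le_max_left _ _)
          gcongr
        unfold wt
        rw [hb_def]
        gcongr
      have h2 := wt_le_one (t⁻¹ • (z - x))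
      calc w z * wt (t⁻¹ • (z - x)) ≤ w z * 1 := by gcongr
        _ = b⁻¹ * (w z * b) := by field_simp
        _ ≤ b⁻¹ * (w z * wt (s⁻¹ • (z - a))) := by gcongr
    · have h0 : wt (t⁻¹ • (z - x)) = 0 := by
        refine wt_eq_zero ?_
        rw [mem_closedBall, dist_eq_norm, not_le] at hz
        rw [norm_smul, norm_inv, Real.norm_of_nonneg ht.le, ← div_eq_inv_mul, one_le_div ht]
        exact hz.le
      simp only [h0, mul_zero]
      by_cases hz2 : z ∈ closedBall a s
      · have := hnn z hz2
        have := wt_nonneg (s⁻¹ • (z - a))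
        positivity
      · have h0' : wt (s⁻¹ • (z - a)) = 0 := by
          refine wt_eq_zero ?_
          rw [mem_closedBall, dist_eq_norm, not_le] at hz2
          rw [norm_smul, norm_inv, Real.norm_of_nonneg hs0.le, ← div_eq_inv_mul, one_le_div hs0]
          exact hz2.le
        simp [h0']
  rw [integral_const_mul, e1, e2] at hle
  have hI := integral_wt_pos (n := n)
  have hwa : 0 ≤ w a := hnn a (mem_closedBall_self hs0.le)
  have h3 : w x ≤ b⁻¹ * s ^ n / t ^ n * w a := by
    rw [div_mul_eq_mul_div, le_div_iff₀ (by positivity)]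
    refine le_of_mul_le_mul_right ?_ hI
    calc w x * t ^ n * ∫ y : 𝔼 n, wt y = t ^ n * (w x * ∫ y : 𝔼 n, wt y) := by ring
      _ ≤ _ := hle
      _ = _ := by ring
  exact h3.trans (by gcongr; exact le_max_right _ _)

/-- Interior gradient estimate for a harmonic function bounded by `K`, obtained by comparing the
solid means around `0` and around a nearby point. -/
lemma exists_gradient_bound (n : ℕ) :
    ∃ C : ℝ, 0 ≤ C ∧ ∀ (w : (𝔼 n) → ℝ) (U : Set (𝔼 n)) (K : ℝ), IsOpen U → HarmonicOnE w U →
      closedBall 0 (1 / 2) ⊆ U → (∀ y ∈ closedBall (0 : 𝔼 n) (1 / 2), |w y| ≤ K) →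
      ‖fderiv ℝ w 0‖ ≤ C * K := by
  set I := ∫ y : 𝔼 n, wt y
  have hI : 0 < I := integral_wt_pos
  set V := (volume (closedBall (0 : 𝔼 n) (1 / 2))).toReal with hV
  refine ⟨40 * V / ((1 / 4) ^ n * I), by positivity, ?_⟩
  intro w U K hU hw hsub hK
  have hK0 : 0 ≤ K := (abs_nonneg _).trans (hK 0 (mem_closedBall_self (by norm_num)))
  refine norm_fderiv_le_of_lip' ℝ (by positivity) ?_
  filter_upwards [ball_mem_nhds (0 : 𝔼 n) (by norm_num : (0 : ℝ) < 1 / 4)] with h hh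
  rw [mem_ball_zero_iff] at hh
  have hsub' : ∀ x : 𝔼 n, ‖x‖ < 1 / 4 → closedBall x (1 / 4) ⊆ closedBall 0 (1 / 2) := by
    intro x hx
    refine closedBall_subset_closedBall' ?_
    rw [dist_zero_right]; linarith
  have h14 : (0 : ℝ) < 1 / 4 := by norm_num
  obtain ⟨i1, e1⟩ := mean_value hU hw h14 ((hsub' h hh).trans hsub)
  obtain ⟨i2, e2⟩ := mean_value hU hw h14 ((hsub' 0 (by simp)).trans hsub)
  have hdiff : (1 / 4) ^ n * I * (w h - w 0) =
      ∫ z, (w z * wt ((1 / 4 : ℝ)⁻¹ • (z - h)) - w z * wt ((1 / 4 : ℝ)⁻¹ • (z - 0))) := by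
    rw [integral_sub i1 i2, e1, e2]; ring
  have hz0 : ∀ x : 𝔼 n, ‖x‖ < 1 / 4 → ∀ z, z ∉ closedBall (0 : 𝔼 n) (1 / 2) →
      wt ((1 / 4 : ℝ)⁻¹ • (z - x)) = 0 := fun x hx z hz => by
    refine wt_eq_zero ?_
    have hz' : z ∉ closedBall x (1 / 4) := fun h => hz (hsub' x hx h)
    rw [mem_closedBall, dist_eq_norm, not_le] at hz'
    rw [norm_smul]
    norm_num
    linarith
  have hbound : ∀ z, ‖w z * wt ((1 / 4 : ℝ)⁻¹ • (z - h)) - w z * wt ((1 / 4 : ℝ)⁻¹ • (z - 0))‖ ≤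
      (closedBall (0 : 𝔼 n) (1 / 2)).indicator (fun _ => 40 * K * ‖h‖) z := by
    intro z
    by_cases hz : z ∈ closedBall (0 : 𝔼 n) (1 / 2)
    · rw [indicator_of_mem hz, ← mul_sub, norm_mul]
      have h1 := abs_wt_sub_le ((1 / 4 : ℝ)⁻¹ • (z - h)) ((1 / 4 : ℝ)⁻¹ • (z - 0))
      have hzn : ‖z‖ ≤ 1 / 2 := by simpa using hz
      have e3 : ‖(1 / 4 : ℝ)⁻¹ • (z - h) - (1 / 4 : ℝ)⁻¹ • (z - 0)‖ = 4 * ‖h‖ := by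
        rw [← smul_sub, norm_smul]; simp
      have e4 : ‖(1 / 4 : ℝ)⁻¹ • (z - h)‖ ≤ 3 := by
        rw [norm_smul]
        have := norm_sub_le z h
        norm_num; linarith
      have e5 : ‖(1 / 4 : ℝ)⁻¹ • (z - 0)‖ ≤ 2 := by
        rw [norm_smul]
        norm_num; linarith
      rw [e3] at h1
      calc ‖w z‖ * ‖wt ((1 / 4 : ℝ)⁻¹ • (z - h)) - wt ((1 / 4 : ℝ)⁻¹ • (z - 0))‖
          ≤ K * (2 * (4 * ‖h‖ * (3 + 2))) := by
            refine mul_le_mul (hK z hz) (h1.trans ?_) (norm_nonneg _) hK0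
            gcongr
        _ = 40 * K * ‖h‖ := by ring
    · rw [indicator_of_notMem hz, hz0 h hh z hz, hz0 0 (by simp) z hz]
      simp
  have hmean : ‖(1 / 4) ^ n * I * (w h - w 0)‖ ≤ 40 * K * ‖h‖ * V := by
    rw [hdiff]
    refine (norm_integral_le_of_norm_le ?_ (Eventually.of_forall hbound)).trans ?_
    · exact (integrable_indicator_iff measurableSet_closedBall).2
        (integrableOn_const (measure_closedBall_lt_top.ne))
    · rw [integral_indicator measurableSet_closedBall, setIntegral_const, smul_eq_mul, mul_comm]
      exact le_of_eq rfl
  rw [norm_mul, Real.norm_of_nonneg (by positivity : 0 ≤ (1 / 4 : ℝ) ^ n * I)] at hmean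
  rw [sub_zero]
  calc ‖w h - w 0‖ ≤ (40 * K * ‖h‖ * V) / ((1 / 4) ^ n * I) := by
        rw [le_div_iff₀ (by positivity), mul_comm]; exact hmean
    _ = _ := by ring

end Harnack

/-! ### The exponential barrier and the Hopf bound -/

section Hopf

variable {n : ℕ}

local notation "𝔼" n => EuclideanSpace ℝ (Fin n)

/-- The radial barrier `c (e^{α (1 - ‖y‖²)} - 1)`, vanishing on the unit sphere. -/
noncomputable def barrier (c α : ℝ) (y : 𝔼 n) : ℝ := c * (Real.exp (α * (1 - ‖y‖ ^ 2)) - 1)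

lemma contDiff_barrier (c α : ℝ) : ContDiff ℝ 2 (barrier c α : (𝔼 n) → ℝ) := by
  unfold barrier
  have : ContDiff ℝ 2 (fun y : 𝔼 n => ‖y‖ ^ 2) := contDiff_norm_sq ℝ
  fun_prop

lemma hasFDerivAt_exp_radial (α : ℝ) (y : 𝔼 n) :
    HasFDerivAt (fun y : 𝔼 n => Real.exp (α * (1 - ‖y‖ ^ 2)))
      ((-2 * α * Real.exp (α * (1 - ‖y‖ ^ 2))) • innerSL ℝ y) y := by
  have h1 : HasFDerivAt (fun y : 𝔼 n => 1 - ‖y‖ ^ 2) (-(2 • innerSL ℝ y)) y :=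
    (hasStrictFDerivAt_norm_sq y).hasFDerivAt.const_sub 1
  have h2 := (h1.const_mul α).exp
  have h3 : (-2 * α * Real.exp (α * (1 - ‖y‖ ^ 2))) • innerSL ℝ y =
      Real.exp (α * (1 - ‖y‖ ^ 2)) • α • (-(2 • innerSL ℝ y)) := by
    ext v; simp; ring
  rw [h3]; exact h2

lemma lapE_barrier (c α : ℝ) (y : 𝔼 n) :
    lapE (barrier c α) y =
      c * Real.exp (α * (1 - ‖y‖ ^ 2)) * (4 * α ^ 2 * ‖y‖ ^ 2 - 2 * n * α) := by
  have h1 : ∀ z : 𝔼 n, ∀ i : Fin n, fderiv ℝ (barrier c α) z (EuclideanSpace.single i (1 : ℝ)) =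
      -2 * α * c * (Real.exp (α * (1 - ‖z‖ ^ 2)) * z i) := fun z i => by
    have := ((hasFDerivAt_exp_radial α z).sub_const 1).const_mul c
    unfold barrier
    rw [this.fderiv]
    simp [EuclideanSpace.inner_single_right]
    ring
  have h2 : ∀ i : Fin n, fderiv ℝ (fun z => fderiv ℝ (barrier c α) z
      (EuclideanSpace.single i (1 : ℝ))) y (EuclideanSpace.single i (1 : ℝ)) =
      c * Real.exp (α * (1 - ‖y‖ ^ 2)) * (4 * α ^ 2 * (y i) ^ 2 - 2 * α) := fun i => by
    simp only [h1]
    have hp : HasFDerivAt (fun z : 𝔼 n => z i) (EuclideanSpace.proj i : (𝔼 n) →L[ℝ] ℝ) y :=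
      (EuclideanSpace.proj i : (𝔼 n) →L[ℝ] ℝ).hasFDerivAt
    have := ((hasFDerivAt_exp_radial α y).fun_mul hp).const_mul (-2 * α * c)
    rw [this.fderiv]
    simp [EuclideanSpace.inner_single_right]
    ring
  unfold lapE
  simp only [h2]
  rw [← Finset.mul_sum, Finset.sum_sub_distrib, ← Finset.mul_sum, EuclideanSpace.norm_sq_eq]
  simp
  left
  ring

/-- Comparison with the barrier on the annulus `ρ ≤ ‖y‖ ≤ 1`, where the barrier is strictly
subharmonic because `n < 2 α ρ²`. -/
lemma barrier_le {v : (𝔼 n) → ℝ} (hv : HarmonicOnE v (ball 0 1))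
    (hc : ContinuousOn v (closedBall 0 1)) (hnn : ∀ y ∈ closedBall (0 : 𝔼 n) 1, 0 ≤ v y)
    {ρ α c m : ℝ} (hρ : 0 < ρ) (hα : n < 2 * α * ρ ^ 2) (hα0 : 0 < α) (hcpos : 0 < c)
    (hm : ∀ y, ‖y‖ = ρ → m ≤ v y) (hcm : c * (Real.exp (α * (1 - ρ ^ 2)) - 1) ≤ m) :
    ∀ y, ρ ≤ ‖y‖ → ‖y‖ ≤ 1 → barrier c α y ≤ v y := by
  set A : Set (𝔼 n) := closedBall 0 1 ∩ {y | ρ ≤ ‖y‖}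
  have hA : IsCompact A := (isCompact_closedBall _ _).inter_right
    (isClosed_le continuous_const continuous_norm)
  intro y0 h1 h2
  have hy0 : y0 ∈ A := ⟨by simpa using h2, h1⟩
  have hcont : ContinuousOn (fun y => barrier c α y - v y) A :=
    (contDiff_barrier c α).continuous.continuousOn.sub (hc.mono inter_subset_left)
  obtain ⟨y, hyA, hmax⟩ := hA.exists_isMaxOn ⟨y0, hy0⟩ hcont
  have hfin : barrier c α y - v y ≤ 0 := by
    have hy1 : ‖y‖ ≤ 1 := by simpa using hyA.1
    have hyρ : ρ ≤ ‖y‖ := hyA.2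
    rcases hy1.lt_or_eq with hlt | heq
    · rcases hyρ.lt_or_eq with hgt | heq
      · exfalso
        have hopen : IsOpen (ball (0 : 𝔼 n) 1 ∩ {y | ρ < ‖y‖}) :=
          isOpen_ball.inter (isOpen_lt continuous_const continuous_norm)
        have hloc : IsLocalMax (fun y => barrier c α y - v y) y := by
          filter_upwards [hopen.mem_nhds ⟨by simpa using hlt, hgt⟩] with z hz
          exact hmax ⟨ball_subset_closedBall hz.1, (show ρ < ‖z‖ from hz.2).le⟩
        have hyb : y ∈ ball (0 : 𝔼 n) 1 := by simpa using hlt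
        have hle := lapE_nonpos_of_isLocalMax
          ((contDiff_barrier c α).contDiffAt.sub (hv.1 y hyb)) hloc
        rw [lapE_sub (contDiff_barrier c α).contDiffAt (hv.1 y hyb), hv.2 y hyb, lapE_barrier,
          sub_zero] at hle
        have hpos : 0 < 4 * α ^ 2 * ‖y‖ ^ 2 - 2 * n * α := by
          have : ρ ^ 2 ≤ ‖y‖ ^ 2 := by gcongr
          have h5 : (n : ℝ) < 2 * α * ‖y‖ ^ 2 := hα.trans_le (by gcongr)
          nlinarith
        have := mul_pos (mul_pos hcpos (Real.exp_pos (α * (1 - ‖y‖ ^ 2)))) hpos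
        linarith
      · have := hm y heq.symm
        simp only [barrier, ← heq]; linarith
    · have := hnn y hyA.1
      simp only [barrier, heq]; norm_num; linarith
  have := hmax hy0
  simp only [mem_ofPred_eq] at this
  linarith

/-- Hopf-type bound: if `v` vanishes at the boundary point `z` with limiting slope at most `1`,
the values of `v` on the sphere of radius `ρ` cannot be large. -/
lemma hopf_bound {v : (𝔼 n) → ℝ} (hv : HarmonicOnE v (ball 0 1))
    (hc : ContinuousOn v (closedBall 0 1)) (hnn : ∀ y ∈ closedBall (0 : 𝔼 n) 1, 0 ≤ v y)
    {z : 𝔼 n} (hz : ‖z‖ = 1) (hvz : v z = 0)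
    (hslope : ∀ ε > 0, ∃ δ > 0, ∀ y ∈ ball (0 : 𝔼 n) 1, dist y z < δ → ‖fderiv ℝ v y‖ ≤ 1 + ε)
    {ρ α m : ℝ} (hρ : 0 < ρ) (hρ1 : ρ < 1) (hα : n < 2 * α * ρ ^ 2) (hα0 : 0 < α)
    (hm : ∀ y, ‖y‖ = ρ → m ≤ v y) :
    2 * α * m ≤ Real.exp (α * (1 - ρ ^ 2)) - 1 := by
  have hx : 0 < α * (1 - ρ ^ 2) := mul_pos hα0 (by nlinarith)
  have hE : 0 < Real.exp (α * (1 - ρ ^ 2)) - 1 := by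
    have := Real.add_one_lt_exp hx.ne'
    linarith
  rcases le_or_gt m 0 with hm0 | hm0
  · nlinarith
  set E := Real.exp (α * (1 - ρ ^ 2)) - 1
  set c := m / E with hc_def
  have hcpos : 0 < c := div_pos hm0 hE
  have hcm : c * E = m := by rw [hc_def]; field_simp
  have hbar := barrier_le hv hc hnn hρ hα hα0 hcpos hm hcm.le
  -- Along the radius ending at `z`, `v` lies between the barrier and a line of slope `1 + ε`.
  have hkey : ∀ ε > 0, ∃ δ > 0, ∀ s, 0 < s → s < δ → c * α * (2 - s) ≤ 1 + ε := by
    intro ε hε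
    obtain ⟨δ, hδ, hd⟩ := hslope ε hε
    refine ⟨min δ (1 - ρ), lt_min hδ (by linarith), fun s hs hsδ => ?_⟩
    have hs1 : s < δ := hsδ.trans_le (min_le_left _ _)
    have hs2 : s < 1 - ρ := hsδ.trans_le (min_le_right _ _)
    have hmem : ∀ σ, 0 < σ → σ ≤ s → (1 - σ) • z ∈ ball (0 : 𝔼 n) 1 ∩ ball z δ := by
      intro σ h0 h1
      constructor
      · rw [mem_ball_zero_iff, norm_smul, hz, mul_one, Real.norm_of_nonneg (by linarith)]
        linarith
      · rw [mem_ball, dist_eq_norm, sub_smul, one_smul, sub_sub_cancel_left, norm_neg, norm_smul,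
          hz, mul_one, Real.norm_of_nonneg h0.le]
        linarith
    have hlip : ∀ σ, 0 < σ → σ ≤ s →
        v ((1 - s) • z) - v ((1 - σ) • z) ≤ (1 + ε) * (s - σ) := by
      intro σ h0 h1
      have := ((convex_ball (0 : 𝔼 n) 1).inter (convex_ball z δ)).norm_image_sub_le_of_norm_fderiv_le
        (fun x hx => (hv.1 x hx.1).differentiableAt (by norm_num))
        (fun x hx => hd x hx.1 hx.2) (hmem σ h0 h1) (hmem s hs le_rfl)
      rw [← sub_smul, norm_smul, hz, mul_one] at this
      refine (le_abs_self _).trans (this.trans (le_of_eq ?_))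
      rw [Real.norm_eq_abs, show (1 - s) - (1 - σ) = -(s - σ) by ring, abs_neg,
        abs_of_nonneg (by linarith)]
    have hlim : v ((1 - s) • z) ≤ (1 + ε) * s := by
      have hT : Tendsto (fun σ : ℝ => (1 - σ) • z) (𝓝[>] 0) (𝓝[closedBall 0 1] z) := by
        refine tendsto_nhdsWithin_iff.2 ⟨?_, ?_⟩
        · have : Continuous (fun σ : ℝ => (1 - σ) • z) := by fun_prop
          have := this.tendsto 0
          simp only [sub_zero, one_smul] at this
          exact this.mono_left nhdsWithin_le_nhds
        · filter_upwards [Ioo_mem_nhdsGT hs] with σ hσ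
          exact ball_subset_closedBall (hmem σ hσ.1 hσ.2.le).1
      have hT2 := (hc z (by simp [hz])).tendsto.comp hT
      rw [hvz] at hT2
      have hT3 : Tendsto (fun σ : ℝ => v ((1 - s) • z) - v ((1 - σ) • z)) (𝓝[>] 0)
          (𝓝 (v ((1 - s) • z) - 0)) := tendsto_const_nhds.sub hT2
      have hT4 : Tendsto (fun σ : ℝ => (1 + ε) * (s - σ)) (𝓝[>] 0) (𝓝 ((1 + ε) * (s - 0))) := by
        have : Continuous (fun σ : ℝ => (1 + ε) * (s - σ)) := by fun_prop
        exact (this.tendsto 0).mono_left nhdsWithin_le_nhds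
      have := le_of_tendsto_of_tendsto hT3 hT4 (by
        filter_upwards [Ioo_mem_nhdsGT hs] with σ hσ
        exact hlip σ hσ.1 hσ.2.le)
      simpa using this
    have hns : ‖(1 - s) • z‖ = 1 - s := by
      rw [norm_smul, hz, mul_one, Real.norm_of_nonneg (by linarith)]
    have hb := hbar ((1 - s) • z) (by rw [hns]; linarith) (by rw [hns]; linarith)
    rw [barrier, hns] at hb
    have he := Real.add_one_le_exp (α * (1 - (1 - s) ^ 2))
    have h6 : c * (α * (1 - (1 - s) ^ 2)) ≤ (1 + ε) * s :=
      le_trans (by gcongr; linarith) (hb.trans hlim)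
    refine le_of_mul_le_mul_right ?_ hs
    calc c * α * (2 - s) * s = c * (α * (1 - (1 - s) ^ 2)) := by ring
      _ ≤ _ := h6
  have h2 : 2 * α * c ≤ 1 := by
    refine le_of_forall_pos_le_add fun ε hε => ?_
    obtain ⟨δ, hδ, hd⟩ := hkey ε hε
    have hT : Tendsto (fun s : ℝ => c * α * (2 - s)) (𝓝[>] 0) (𝓝 (c * α * (2 - 0))) := by
      have : Continuous (fun s : ℝ => c * α * (2 - s)) := by fun_prop
      exact (this.tendsto 0).mono_left nhdsWithin_le_nhds
    have := le_of_tendsto hT (by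
      filter_upwards [Ioo_mem_nhdsGT hδ] with s hs
      exact hd s hs.1 hs.2)
    linarith
  calc 2 * α * m = 2 * α * c * E := by rw [← hcm]; ring
    _ ≤ 1 * E := by gcongr
    _ = E := one_mul _

end Hopf

/-! ### Roof functions rescaled to the unit ball -/

section UnitRoof

variable {n : ℕ}

local notation "𝔼" n => EuclideanSpace ℝ (Fin n)

/-- The rescaling of a roof function to the largest ball around a point of `Ω`: nonnegative and
harmonic in the unit ball, vanishing at some point `z` of the unit sphere at which the gradient
has limiting norm at most `1`. -/
structure UnitRoof (v : (𝔼 n) → ℝ) : Prop where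
  harmonic : HarmonicOnE v (ball 0 1)
  cont : ContinuousOn v (closedBall 0 1)
  nonneg : ∀ y ∈ closedBall (0 : 𝔼 n) 1, 0 ≤ v y
  touch : ∃ z : 𝔼 n, ‖z‖ = 1 ∧ v z = 0 ∧
    ∀ ε > 0, ∃ δ > 0, ∀ y ∈ ball (0 : 𝔼 n) 1, dist y z < δ → ‖fderiv ℝ v y‖ ≤ 1 + ε

/-- The gradient at the centre of a rescaled roof function is bounded in terms of `n` only: the
Hopf bound and Harnack's inequality control `v 0`, and then `v` near `0`. -/
lemma UnitRoof.exists_bound (n : ℕ) :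
    ∃ C : ℝ, ∀ v : (𝔼 n) → ℝ, UnitRoof v → ‖fderiv ℝ v 0‖ ≤ C := by
  obtain ⟨C1, hC1, H1⟩ := harnack_upper n (ρ := 1 / 4) (s := 1 / 2) (by norm_num) (by norm_num)
  obtain ⟨C2, hC2, H2⟩ := harnack_upper n (ρ := 1 / 2) (s := 3 / 4) (by norm_num) (by norm_num)
  obtain ⟨C3, hC3, H3⟩ := exists_gradient_bound n
  set α : ℝ := 8 * n + 8 with hα
  have hα0 : 0 < α := by positivity
  set E := Real.exp (α * (1 - (1 / 4) ^ 2)) - 1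
  refine ⟨C3 * (C2 * (C1 * E / (2 * α))), fun v hv => ?_⟩
  obtain ⟨z, hz, hvz, hslope⟩ := hv.touch
  have hv0 : v 0 ≤ C1 * E / (2 * α) := by
    have := hopf_bound hv.harmonic hv.cont hv.nonneg hz hvz hslope (ρ := 1 / 4) (α := α)
      (m := v 0 / C1) (by norm_num) (by norm_num) (by rw [hα]; linarith) hα0 (by
        intro y hy
        have hsub : closedBall y (1 / 2) ⊆ ball 0 1 := by
          intro x hx
          rw [mem_closedBall, dist_eq_norm] at hx
          rw [mem_ball_zero_iff]
          have := norm_add_le (x - y) y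
          rw [sub_add_cancel] at this
          linarith
        rw [div_le_iff₀ (by linarith), mul_comm]
        refine H1 v (ball 0 1) y isOpen_ball hv.harmonic hsub
          (fun x hx => hv.nonneg x (ball_subset_closedBall (hsub hx))) 0 ?_
        rw [mem_closedBall, dist_zero_left, hy])
    rw [le_div_iff₀ (by positivity)]
    calc v 0 * (2 * α) = C1 * (2 * α * (v 0 / C1)) := by field_simp
      _ ≤ C1 * E := by gcongr
  refine (H3 v (ball 0 1) (C2 * (C1 * E / (2 * α))) isOpen_ball hv.harmonic
    (closedBall_subset_ball (by norm_num)) fun y hy => ?_)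
  rw [abs_of_nonneg (hv.nonneg y (closedBall_subset_closedBall (by norm_num) hy))]
  refine (H2 v (ball 0 1) 0 isOpen_ball hv.harmonic (closedBall_subset_ball (by norm_num))
    (fun x hx => hv.nonneg x (closedBall_subset_closedBall (by norm_num) hx)) y hy).trans ?_
  gcongr

/-- Harnack's inequality for the directional derivative: if `∂ₑ v` nearly attains its upper bound
`M` at the centre, it does so on a whole smaller ball. It is applied to the difference quotients
`M - (v (x + h e) - v x) / h`, so that no regularity beyond `C²` is needed. -/
lemma UnitRoof.deriv_harnack (n : ℕ) {ρ : ℝ} (hρ : 0 ≤ ρ) (hρ1 : ρ < 1) :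
    ∃ C : ℝ, 1 ≤ C ∧ ∀ (v : (𝔼 n) → ℝ) (M : ℝ) (e : 𝔼 n), HarmonicOnE v (ball 0 1) → ‖e‖ ≤ 1 →
      (∀ y ∈ ball (0 : 𝔼 n) 1, ‖fderiv ℝ v y‖ ≤ M) →
      ∀ x ∈ closedBall (0 : 𝔼 n) ρ, M - fderiv ℝ v x e ≤ C * (M - fderiv ℝ v 0 e) := by
  set s := (1 + ρ) / 2 with hs
  have hs1 : s < 1 := by rw [hs]; linarith
  have hρs : ρ < s := by rw [hs]; linarith
  obtain ⟨C, hC, H⟩ := harnack_upper n hρ hρs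
  refine ⟨C, hC, fun v M e hv he hM x hx => ?_⟩
  have hM0 : 0 ≤ M := (norm_nonneg _).trans (hM 0 (by simp))
  have hball : ∀ h, 0 < h → h < 1 - s → ∀ y ∈ ball (0 : 𝔼 n) (1 - h),
      y ∈ ball (0 : 𝔼 n) 1 ∧ h • e + (1 : ℝ) • y ∈ ball (0 : 𝔼 n) 1 := by
    intro h h0 h1 y hy
    rw [mem_ball_zero_iff] at hy
    refine ⟨by rw [mem_ball_zero_iff]; linarith, ?_⟩
    rw [mem_ball_zero_iff, one_smul]
    have h2 := norm_add_le (h • e) y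
    have h3 : ‖h • e‖ ≤ h := by
      rw [norm_smul, Real.norm_of_nonneg h0.le]
      nlinarith
    linarith
  have hq : ∀ h, 0 < h → h < 1 - s →
      M - h⁻¹ * (v (h • e + x) - v x) ≤ C * (M - h⁻¹ * (v (h • e + 0) - v 0)) := by
    intro h h0 h1
    set w : (𝔼 n) → ℝ := fun y => M * h - (1 * v (h • e + (1 : ℝ) • y) - v y)
    have hw : HarmonicOnE w (ball 0 (1 - h)) := by
      refine ⟨fun y hy => ?_, fun y hy => ?_⟩
      · obtain ⟨hy1, hy2⟩ := hball h h0 h1 y hy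
        exact contDiffAt_const.sub ((contDiffAt_affine _ _ _ _ (hv.1 _ hy2)).sub (hv.1 y hy1))
      · obtain ⟨hy1, hy2⟩ := hball h h0 h1 y hy
        have hA := contDiffAt_affine (h • e) 1 1 y (hv.1 _ hy2)
        rw [lapE_sub contDiffAt_const (hA.sub (hv.1 y hy1)), lapE_sub hA (hv.1 y hy1),
          lapE_affine _ _ _ _ (hv.1 _ hy2), hv.2 _ hy2, hv.2 _ hy1, lapE_const]
        simp
    have hsub : closedBall (0 : 𝔼 n) s ⊆ ball 0 (1 - h) :=
      closedBall_subset_ball (by linarith)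
    have hnn : ∀ y ∈ closedBall (0 : 𝔼 n) s, 0 ≤ w y := by
      intro y hy
      obtain ⟨hy1, hy2⟩ := hball h h0 h1 y (hsub hy)
      have := (convex_ball (0 : 𝔼 n) 1).norm_image_sub_le_of_norm_fderiv_le
        (fun z hz => (hv.1 z hz).differentiableAt (by norm_num)) hM hy1 hy2
      rw [one_smul, add_sub_cancel_right, norm_smul, Real.norm_of_nonneg h0.le] at this
      have h5 := (le_abs_self _).trans this
      have h6 : M * (h * ‖e‖) ≤ M * h := by
        gcongr
        nlinarith
      simp only [w, one_smul, one_mul]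
      linarith
    have hmain := H w _ 0 isOpen_ball hw hsub hnn x hx
    simp only [w, one_smul, one_mul] at hmain
    have e1 : M - h⁻¹ * (v (h • e + x) - v x) = h⁻¹ * (M * h - (v (h • e + x) - v x)) := by
      field_simp
    have e2 : M - h⁻¹ * (v (h • e + 0) - v 0) = h⁻¹ * (M * h - (v (h • e + 0) - v 0)) := by
      field_simp
    rw [e1, e2, mul_left_comm]
    gcongr
  have hlim : ∀ y ∈ ball (0 : 𝔼 n) 1, Tendsto (fun h : ℝ => h⁻¹ * (v (h • e + y) - v y)) (𝓝[>] 0)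
      (𝓝 (fderiv ℝ v y e)) := by
    intro y hy
    have := ((hv.1 y hy).differentiableAt (by norm_num)).hasFDerivAt.hasLineDerivAt e
    have := this.tendsto_slope_zero_right
    simpa [add_comm] using this
  have hx1 : x ∈ ball (0 : 𝔼 n) 1 := closedBall_subset_ball hρ1 hx
  refine le_of_tendsto_of_tendsto (tendsto_const_nhds.sub (hlim x hx1))
    ((tendsto_const_nhds.sub (hlim 0 (by simp))).const_mul C) ?_
  filter_upwards [Ioo_mem_nhdsGT (by linarith : (0 : ℝ) < 1 - s)] with h hh
  exact hq h hh.1 hh.2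

/-- If the gradient nearly attains its upper bound `M` at the centre, then `v` grows with slope
close to `M` in a fixed direction, hence is at least about `M (1 - ρ)` on the sphere of radius
`ρ`, and the Hopf bound with `ρ` close to `1` forces `M ≤ 2`. -/
lemma UnitRoof.le_two (hn : 1 ≤ n) :
    ∃ ε : ℝ, 0 < ε ∧ ∀ (v : (𝔼 n) → ℝ) (M : ℝ), UnitRoof v →
      (∀ y ∈ ball (0 : 𝔼 n) 1, ‖fderiv ℝ v y‖ ≤ M) → (1 - ε) * M < ‖fderiv ℝ v 0‖ → M ≤ 2 := by
  have hn' : (1 : ℝ) ≤ n := by exact_mod_cast hn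
  -- `d = 1 - ρ`, where the Hopf bound is used on the sphere of radius `ρ` with `α = 2 n`. The
  -- Harnack ball has radius `1 - d / 4`. The resulting bound is `21 / 128 * M ≤ 5 / 16`.
  set d : ℝ := 1 / (16 * n) with hd
  have hd0 : 0 < d := by positivity
  have hdn : d * n = 1 / 16 := by rw [hd]; field_simp
  have hd1 : d ≤ 1 / 16 := by nlinarith
  obtain ⟨C, hC, H⟩ := UnitRoof.deriv_harnack n (ρ := 1 - d / 4) (by linarith) (by linarith)
  refine ⟨1 / (8 * C), by positivity, fun v M hv hM h0 => ?_⟩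
  have hM0 : 0 ≤ M := (norm_nonneg _).trans (hM 0 (by simp))
  obtain ⟨e, he, hLe⟩ : ∃ e : 𝔼 n, ‖e‖ ≤ 1 ∧ (1 - 1 / (8 * C)) * M < fderiv ℝ v 0 e := by
    obtain ⟨e, he, hLe⟩ := (fderiv ℝ v 0).exists_lt_apply_of_lt_opNorm h0
    rw [Real.norm_eq_abs, lt_abs] at hLe
    rcases hLe with h | h
    · exact ⟨e, he.le, h⟩
    · exact ⟨-e, by rw [norm_neg]; exact he.le, by rw [map_neg]; exact h⟩
  have hder : ∀ x ∈ closedBall (0 : 𝔼 n) (1 - d / 4), 7 / 8 * M ≤ fderiv ℝ v x e := by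
    intro x hx
    have h1 := H v M e hv.harmonic he hM x hx
    have h2 : M - fderiv ℝ v 0 e ≤ 1 / (8 * C) * M := by linarith
    have h3 : C * (M - fderiv ℝ v 0 e) ≤ C * (1 / (8 * C) * M) := by gcongr
    have h4 : C * (1 / (8 * C) * M) = M / 8 := by field_simp
    linarith
  -- Moving back from `y` by `3 / 4 * d` in the direction `e` stays inside the Harnack ball, and
  -- `v` is nonnegative at the starting point.
  have hm : ∀ y : 𝔼 n, ‖y‖ = 1 - d → 3 / 4 * d * (7 / 8 * M) ≤ v y := by
    intro y hy
    have hmem : ∀ σ ∈ Icc (0 : ℝ) (3 / 4 * d), y + (σ - 3 / 4 * d) • e ∈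
        closedBall (0 : 𝔼 n) (1 - d / 4) := by
      intro σ hσ
      rw [mem_closedBall_zero_iff]
      have h1 := norm_add_le y ((σ - 3 / 4 * d) • e)
      have h2 : ‖(σ - 3 / 4 * d) • e‖ ≤ 3 / 4 * d := by
        rw [norm_smul, Real.norm_eq_abs, abs_of_nonpos (by linarith [hσ.2])]
        nlinarith [hσ.1, hσ.2, norm_nonneg e]
      linarith
    have hball : closedBall (0 : 𝔼 n) (1 - d / 4) ⊆ ball 0 1 :=
      closedBall_subset_ball (by linarith)
    have hderiv : ∀ σ ∈ Icc (0 : ℝ) (3 / 4 * d), HasDerivAt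
        (fun σ : ℝ => v (y + (σ - 3 / 4 * d) • e)) (fderiv ℝ v (y + (σ - 3 / 4 * d) • e) e) σ := by
      intro σ hσ
      have hl : HasDerivAt (fun σ : ℝ => y + (σ - 3 / 4 * d) • e) e σ := by
        simpa using (((hasDerivAt_id σ).sub_const (3 / 4 * d)).smul_const e).const_add y
      exact ((hv.harmonic.1 _ (hball (hmem σ hσ))).differentiableAt
        (by norm_num)).hasFDerivAt.comp_hasDerivAt σ hl
    obtain ⟨σ, hσ, hs⟩ := exists_hasDerivAt_eq_slope
      (fun σ : ℝ => v (y + (σ - 3 / 4 * d) • e)) _ (by positivity : (0 : ℝ) < 3 / 4 * d)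
      (fun σ hσ => (hderiv σ hσ).continuousAt.continuousWithinAt)
      (fun σ hσ => hderiv σ (Ioo_subset_Icc_self hσ))
    have h1 := hder _ (hmem σ (Ioo_subset_Icc_self hσ))
    have h2 := hv.nonneg _ (ball_subset_closedBall (hball (hmem 0 ⟨le_rfl, by positivity⟩)))
    rw [hs, le_div_iff₀ (by linarith)] at h1
    simp only [sub_self, zero_smul, add_zero] at h1
    linarith
  obtain ⟨z, hz, hvz, hslope⟩ := hv.touch
  have hα : (n : ℝ) < 2 * (2 * n) * (1 - d) ^ 2 := by
    have : (15 / 16 : ℝ) ≤ 1 - d := by linarith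
    have : (15 / 16 : ℝ) ^ 2 ≤ (1 - d) ^ 2 := by gcongr
    nlinarith
  have hopf := hopf_bound hv.harmonic hv.cont hv.nonneg hz hvz hslope (ρ := 1 - d) (α := 2 * n)
    (by linarith) (by linarith) hα (by positivity) hm
  set x : ℝ := 2 * n * (1 - (1 - d) ^ 2) with hx
  have hx' : x = 4 * n * d - 2 * n * d ^ 2 := by rw [hx]; ring
  have hx0 : 0 ≤ x := by rw [hx]; exact mul_nonneg (by positivity) (by nlinarith)
  have hx1 : x ≤ 1 / 4 := by
    rw [hx']
    have : 0 ≤ 2 * n * d ^ 2 := by positivity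
    linarith
  have hexp : Real.exp x - 1 ≤ x + x ^ 2 := by
    have := Real.abs_exp_sub_one_sub_id_le (x := x) (by rw [abs_of_nonneg hx0]; linarith)
    linarith [(abs_le.1 this).2]
  have h7 : 2 * (2 * n) * (3 / 4 * d * (7 / 8 * M)) = 21 / 128 * M := by
    linear_combination (21 / 8 * M) * hdn
  rw [h7] at hopf
  have : x ^ 2 ≤ 1 / 16 := by nlinarith
  linarith

end UnitRoof

/-! ### From the domain to the unit ball -/

section Main

variable {n : ℕ}

local notation "𝔼" n => EuclideanSpace ℝ (Fin n)

lemma ball_infDist_frontier_subset {Ω : Set (𝔼 n)} {a : 𝔼 n} (ha : a ∈ Ω) :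
    ball a (infDist a (frontier Ω)) ⊆ Ω := by
  by_contra hcon
  obtain ⟨b, hb, hbΩ⟩ := not_subset.1 hcon
  have hR : 0 < infDist a (frontier Ω) := pos_of_mem_ball hb
  have hpre : IsPreconnected (ball a (infDist a (frontier Ω))) :=
    (convex_ball _ _).isPreconnected
  have hcov : ball a (infDist a (frontier Ω)) ⊆ interior Ω ∪ (closure Ω)ᶜ := by
    intro c hc
    by_contra hcn
    rw [mem_union, not_or, mem_compl_iff, not_not] at hcn
    have := infDist_le_dist_of_mem (x := a) (show c ∈ frontier Ω from ⟨hcn.2, hcn.1⟩)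
    rw [mem_ball, dist_comm] at hc
    linarith
  have hai : a ∈ interior Ω :=
    (hcov (mem_ball_self hR)).resolve_right fun h => h (subset_closure ha)
  have hdisj : Disjoint (interior Ω) (closure Ω)ᶜ :=
    disjoint_compl_right_iff_subset.2 (interior_subset.trans subset_closure)
  exact hbΩ (interior_subset (hpre.subset_left_of_subset_union isOpen_interior
    isClosed_closure.isOpen_compl hdisj hcov ⟨a, mem_ball_self hR, hai⟩ hb))

/-- The function `u` rescaled to the ball of radius `infDist a (frontier Ω)` around `a` is a
`UnitRoof`, and this normalization preserves the gradient. -/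
lemma unitRoof_rescale {Ω : Set (𝔼 n)} (hΩo : IsOpen Ω) {u : (𝔼 n) → ℝ}
    (hu : IsRoofFunctionE Ω u) (hne : (frontier Ω).Nonempty) {a : 𝔼 n} (ha : a ∈ Ω) :
    0 < infDist a (frontier Ω) ∧
    UnitRoof (fun y => (infDist a (frontier Ω))⁻¹ * u (a + infDist a (frontier Ω) • y)) ∧
    ∀ y ∈ ball (0 : 𝔼 n) 1, a + infDist a (frontier Ω) • y ∈ Ω ∧
      fderiv ℝ (fun y => (infDist a (frontier Ω))⁻¹ * u (a + infDist a (frontier Ω) • y)) y =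
        fderiv ℝ u (a + infDist a (frontier Ω) • y) := by
  obtain ⟨hcont, hharm, hpos, hzero, G, hGc, hG, hG1⟩ := hu
  have hR : 0 < infDist a (frontier Ω) := by
    refine (isClosed_frontier.notMem_iff_infDist_pos hne).1 fun h => ?_
    exact disjoint_left.1 (disjoint_frontier_iff_isOpen.2 hΩo) h ha
  have hsub := ball_infDist_frontier_subset ha
  set R := infDist a (frontier Ω) with hRdef
  have hin : ∀ y ∈ ball (0 : 𝔼 n) 1, a + R • y ∈ Ω := fun y hy => by
    refine hsub ?_
    rw [mem_ball_zero_iff] at hy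
    rw [mem_ball, dist_eq_norm, add_sub_cancel_left, norm_smul, Real.norm_of_nonneg hR.le]
    nlinarith
  have hcl : MapsTo (fun y : 𝔼 n => a + R • y) (closedBall 0 1) (closure Ω) := by
    rw [← closure_ball (0 : 𝔼 n) one_ne_zero]
    exact MapsTo.closure (fun y hy => hin y hy) (by fun_prop)
  have hder : ∀ y ∈ ball (0 : 𝔼 n) 1,
      fderiv ℝ (fun y => R⁻¹ * u (a + R • y)) y = fderiv ℝ u (a + R • y) := fun y hy => by
    rw [fderiv_affine a R R⁻¹ y ((hharm.1 _ (hin y hy)).differentiableAt (by norm_num)),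
      inv_mul_cancel₀ hR.ne', one_smul]
  refine ⟨hR, ⟨⟨fun y hy => contDiffAt_affine a R R⁻¹ y (hharm.1 _ (hin y hy)), fun y hy => ?_⟩,
    ?_, fun y hy => ?_, ?_⟩, fun y hy => ⟨hin y hy, hder y hy⟩⟩
  · rw [lapE_affine a R R⁻¹ y (hharm.1 _ (hin y hy)), hharm.2 _ (hin y hy), mul_zero]
  · exact continuousOn_const.mul (hcont.comp (by fun_prop) hcl)
  · refine mul_nonneg (inv_nonneg.2 hR.le) ?_
    by_cases h : a + R • y ∈ Ω
    · exact (hpos _ h).le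
    · exact (hzero _ ⟨hcl hy, by rwa [hΩo.interior_eq]⟩).ge
  · obtain ⟨z, hz, hzd⟩ := isClosed_frontier.exists_infDist_eq_dist hne a
    rw [← hRdef] at hzd
    have hz' : a + R • (R⁻¹ • (z - a)) = z := by
      rw [smul_smul, mul_inv_cancel₀ hR.ne', one_smul, add_sub_cancel]
    refine ⟨R⁻¹ • (z - a), ?_, ?_, fun ε hε => ?_⟩
    · rw [norm_smul, norm_inv, Real.norm_of_nonneg hR.le, ← dist_eq_norm, dist_comm, ← hzd,
        inv_mul_cancel₀ hR.ne']
    · rw [hz', hzero z hz, mul_zero]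
    · have hGz := ((hGc z (frontier_subset_closure hz)).norm).eventually
        (gt_mem_nhds (show ‖G z‖ < 1 + ε by rw [hG1 z hz]; linarith))
      obtain ⟨δ, hδ, hd⟩ := Metric.mem_nhdsWithin_iff.1 hGz
      refine ⟨δ / R, by positivity, fun y hy hyd => ?_⟩
      rw [hder y hy, ← hG _ (hin y hy)]
      refine le_of_lt (hd ⟨?_, subset_closure (hin y hy)⟩)
      rw [mem_ball, ← hz', dist_add_left, dist_smul₀, Real.norm_of_nonneg hR.le]
      rwa [lt_div_iff₀' hR] at hyd

end Main

/-! ### The gradient bound and linear growth -/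

/-- The roof function of an exceptional domain grows at most linearly:
`u(a) ≤ 2 dist(a, ∂Ω)` and hence `u(a) ≤ 2‖a‖ + C`. -/
theorem roof_linear_growth {n : ℕ} (hn : 2 ≤ n)
    (Ω : Set (EuclideanSpace ℝ (Fin n))) (hΩo : IsOpen Ω) (hΩc : IsConnected Ω)
    (hΩne : Ω ≠ univ)
    (u : EuclideanSpace ℝ (Fin n) → ℝ) (hu : IsRoofFunctionE Ω u) :
    (∀ a ∈ Ω, u a ≤ 2 * infDist a (frontier Ω)) ∧
    ∃ C : ℝ, ∀ a ∈ Ω, u a ≤ 2 * ‖a‖ + C := by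
  have hne : (frontier Ω).Nonempty := nonempty_frontier_iff.2 ⟨hΩc.nonempty, hΩne⟩
  have key := fun a (ha : a ∈ Ω) => unitRoof_rescale hΩo hu hne ha
  have hfd0 : ∀ a ∈ Ω, ∀ R : ℝ, fderiv ℝ u (a + R • (0 : EuclideanSpace ℝ (Fin n))) =
      fderiv ℝ u a := fun a _ R => by rw [smul_zero, add_zero]
  obtain ⟨C, hC⟩ := UnitRoof.exists_bound n
  obtain ⟨ε, hε, hle⟩ := UnitRoof.le_two (n := n) (by omega)
  set S : Set ℝ := (fun a => ‖fderiv ℝ u a‖) '' Ω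
  have hSne : S.Nonempty := hΩc.nonempty.image _
  have hSb : BddAbove S := by
    refine ⟨C, ?_⟩
    rintro _ ⟨a, ha, rfl⟩
    obtain ⟨hR, hv, hy⟩ := key a ha
    have := hC _ hv
    rwa [(hy 0 (by simp)).2, hfd0 a ha] at this
  -- The supremum of the gradient need not be attained; rescaling around a point where it is
  -- nearly attained puts that point at the centre of the unit ball.
  have hM2 : sSup S ≤ 2 := by
    by_contra! hM
    obtain ⟨_, ⟨a, ha, rfl⟩, haS⟩ := exists_lt_of_lt_csSup hSne
      (show (1 - ε) * sSup S < sSup S by nlinarith)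
    obtain ⟨hR, hv, hy⟩ := key a ha
    refine absurd (hle _ (sSup S) hv (fun y hyb => ?_) ?_) (not_le.2 hM)
    · rw [(hy y hyb).2]
      exact le_csSup hSb ⟨_, (hy y hyb).1, rfl⟩
    · rwa [(hy 0 (by simp)).2, hfd0 a ha]
  have hfirst : ∀ a ∈ Ω, u a ≤ 2 * infDist a (frontier Ω) := by
    intro a ha
    obtain ⟨hR, hv, hy⟩ := key a ha
    obtain ⟨z, hz, hvz, -⟩ := hv.touch
    set v := fun y => (infDist a (frontier Ω))⁻¹ * u (a + infDist a (frontier Ω) • y)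
    have hbound : ∀ y ∈ ball (0 : EuclideanSpace ℝ (Fin n)) 1, v 0 - v y ≤ 2 := by
      intro y hyb
      have h1 := (convex_ball (0 : EuclideanSpace ℝ (Fin n)) 1).norm_image_sub_le_of_norm_fderiv_le
        (f := v) (𝕜 := ℝ) (C := 2)
        (fun x hx => (hv.harmonic.1 x hx).differentiableAt (by norm_num))
        (fun x hx => by
          rw [(hy x hx).2]
          exact (le_csSup hSb ⟨_, (hy x hx).1, rfl⟩).trans hM2) hyb (mem_ball_self one_pos)
      rw [zero_sub, norm_neg] at h1
      have h2 : ‖y‖ < 1 := by simpa using hyb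
      have := (le_abs_self _).trans h1
      linarith
    have hzc : z ∈ closure (ball (0 : EuclideanSpace ℝ (Fin n)) 1) := by
      rw [closure_ball _ one_ne_zero]; simp [hz]
    have hcc : ContinuousOn (fun y => v 0 - v y)
        (closure (ball (0 : EuclideanSpace ℝ (Fin n)) 1)) := by
      rw [closure_ball _ one_ne_zero]
      exact continuousOn_const.sub hv.cont
    have h3 : v 0 - v z ≤ 2 := le_on_closure hbound hcc continuousOn_const hzc
    have hvz' : v z = 0 := hvz
    rw [hvz', sub_zero] at h3
    simp only [v, smul_zero, add_zero] at h3
    rwa [inv_mul_le_iff₀ hR, mul_comm] at h3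
  refine ⟨hfirst, ?_⟩
  obtain ⟨z, hz⟩ := hne
  refine ⟨2 * ‖z‖, fun a ha => ?_⟩
  have h1 := hfirst a ha
  have h2 := infDist_le_dist_of_mem (x := a) hz
  have h3 := dist_le_norm_add_norm a z
  linarith
end

section
/- Let Ω ⊊ ℝ² be an exceptional domain with classical roof function u. Then ‖∇u(z)‖ ≤ 2 for every z ∈ Ω. -/
/-!
Fix `a ∈ Ω`, put `R = u a` and `ρ = 2 R`, and compare the density `w = ‖∇u‖ / (u + R)` with the
Poincaré density `λ z = 2 ρ / (ρ² - ‖z - a‖²)` of the disc of radius `ρ` about `a`.  Where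
`∇u ≠ 0`, `log ‖∇u‖` is harmonic (it is the logarithm of the modulus of the holomorphic function
`u_x - i u_y`), so `Δ log w = w²`, while `Δ log λ = λ²`.  Hence at an interior maximum of `w / λ`
one has `w² - λ² = Δ log (w / λ) ≤ 0` (`interior_max_bound`).  The other points of the compact set
`closure Ω ∩ closedBall a ρ` are harmless: `1 / λ = 0` on the circle, and `w = 1 / R = 2 / ρ ≤ λ` on
`∂Ω`.  So `w ≤ λ` throughout, and at the centre this reads `‖∇u a‖ ≤ (u a + R) * 2 / ρ = 2`.

The Laplacians are computed as sums of second derivatives along the lines through the maximum point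
in the directions `1` and `i`, which is also how `lapC` is defined.
-/

open Metric Set

/-- The Laplacian of a real-valued function on `ℂ ≅ ℝ²`, as the sum of the second
directional derivatives in the directions `1` and `i`. -/
noncomputable def lapC (u : ℂ → ℝ) (z : ℂ) : ℝ :=
  fderiv ℝ (fun w => fderiv ℝ u w 1) z 1 +
    fderiv ℝ (fun w => fderiv ℝ u w Complex.I) z Complex.I

/-- `u` is harmonic on `s ⊆ ℂ`: twice continuously differentiable with vanishing
Laplacian. -/
def HarmonicOnC (u : ℂ → ℝ) (s : Set ℂ) : Prop :=
  (∀ z ∈ s, ContDiffAt ℝ 2 u z) ∧ ∀ z ∈ s, lapC u z = 0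

/-- `u` is a classical roof function for `Ω ⊆ ℂ`: continuous on the closure, harmonic and
positive in `Ω`, vanishing on `∂Ω`, continuously differentiable up to the boundary
(witnessed by a continuous extension `G` of the differential) with `‖∇u‖ = 1` on `∂Ω`. -/
def IsRoofFunctionC (Ω : Set ℂ) (u : ℂ → ℝ) : Prop :=
  ContinuousOn u (closure Ω) ∧
  HarmonicOnC u Ω ∧
  (∀ z ∈ Ω, 0 < u z) ∧
  (∀ z ∈ frontier Ω, u z = 0) ∧
  ∃ G : ℂ → (ℂ →L[ℝ] ℝ),
    ContinuousOn G (closure Ω) ∧ (∀ z ∈ Ω, G z = fderiv ℝ u z) ∧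
    ∀ z ∈ frontier Ω, ‖G z‖ = 1

open Filter Topology InnerProductSpace

/-- `HasD2 s s₁ s₂`: near `0` the function `s` is differentiable, its derivative at `0` is `s₁`, and
its second derivative exists at `0` and equals `s₂`. -/
def HasD2 (s : ℝ → ℝ) (s₁ s₂ : ℝ) : Prop :=
  ∃ s' : ℝ → ℝ, (∀ᶠ t in 𝓝 0, HasDerivAt s (s' t) t) ∧ s' 0 = s₁ ∧ HasDerivAt s' s₂ 0

lemma HasD2.add {s r : ℝ → ℝ} {s₁ s₂ r₁ r₂ : ℝ} (hs : HasD2 s s₁ s₂) (hr : HasD2 r r₁ r₂) :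
    HasD2 (fun t => s t + r t) (s₁ + r₁) (s₂ + r₂) := by
  obtain ⟨s', h1, h2, h3⟩ := hs
  obtain ⟨r', k1, k2, k3⟩ := hr
  refine ⟨fun t => s' t + r' t, ?_, by simp [h2, k2], h3.add k3⟩
  filter_upwards [h1, k1] with t a b using a.add b

lemma HasD2.sub {s r : ℝ → ℝ} {s₁ s₂ r₁ r₂ : ℝ} (hs : HasD2 s s₁ s₂) (hr : HasD2 r r₁ r₂) :
    HasD2 (fun t => s t - r t) (s₁ - r₁) (s₂ - r₂) := by
  obtain ⟨s', h1, h2, h3⟩ := hs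
  obtain ⟨r', k1, k2, k3⟩ := hr
  refine ⟨fun t => s' t - r' t, ?_, by simp [h2, k2], h3.sub k3⟩
  filter_upwards [h1, k1] with t a b using a.sub b

lemma HasD2.log {s : ℝ → ℝ} {s₁ s₂ : ℝ} (hs : HasD2 s s₁ s₂) (h0 : 0 < s 0) :
    HasD2 (fun t => Real.log (s t)) (s₁ / s 0) (s₂ / s 0 - s₁ ^ 2 / s 0 ^ 2) := by
  obtain ⟨s', h1, h2, h3⟩ := hs
  have hd : HasDerivAt s (s' 0) 0 := h1.self_of_nhds
  refine ⟨fun t => s' t / s t, ?_, by simp [h2], ?_⟩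
  · filter_upwards [h1, hd.continuousAt.eventually (lt_mem_nhds h0)] with t a b
    exact a.log b.ne'
  · refine (h3.div hd h0.ne').congr_deriv ?_
    rw [h2]
    field_simp

/-- Second-order necessary condition: if the second derivative at a local maximum were positive, the
point would also be a local minimum, so the function would be locally constant there. -/
lemma HasD2.nonpos_of_isLocalMax {s : ℝ → ℝ} {s₁ s₂ : ℝ} (hs : HasD2 s s₁ s₂)
    (hm : IsLocalMax s 0) : s₂ ≤ 0 := by
  obtain ⟨s', h1, h2, h3⟩ := hs
  by_contra! hpos
  have hd : deriv s =ᶠ[𝓝 0] s' := h1.mono fun t ht => ht.deriv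
  have hdd : deriv (deriv s) 0 = s₂ := by rw [hd.deriv_eq, h3.deriv]
  have hmin : IsLocalMin s 0 := isLocalMin_of_deriv_deriv_pos (by rw [hdd]; exact hpos)
    hm.deriv_eq_zero h1.self_of_nhds.continuousAt
  have hc : s =ᶠ[𝓝 0] fun _ => s 0 := by
    filter_upwards [hm, hmin] with t a b using le_antisymm a b
  have : deriv (deriv s) 0 = 0 := by
    rw [hc.deriv.deriv_eq]; simp
  linarith

lemma hasDerivAt_line (b v : ℂ) (t : ℝ) : HasDerivAt (fun t : ℝ => b + (t : ℂ) * v) v t := by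
  simpa using ((Complex.ofRealCLM.hasDerivAt (x := t)).mul_const v).const_add b

lemma tendsto_line (b v : ℂ) : Tendsto (fun t : ℝ => b + (t : ℂ) * v) (𝓝 0) (𝓝 b) := by
  simpa using (hasDerivAt_line b v 0).continuousAt.tendsto

/-- Along a line, a `C²` function has the second derivative that enters `lapC`. -/
lemma hasD2_line_of_contDiffAt {u : ℂ → ℝ} {b : ℂ} (hu : ContDiffAt ℝ 2 u b) (R : ℝ) (v : ℂ) :
    HasD2 (fun t => u (b + (t : ℂ) * v) + R) (fderiv ℝ u b v)
      (fderiv ℝ (fun w => fderiv ℝ u w v) b v) := by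
  refine ⟨fun t => fderiv ℝ u (b + (t : ℂ) * v) v, ?_, by simp, ?_⟩
  · have h : ∀ᶠ w in 𝓝 b, ContDiffAt ℝ 2 u w := hu.eventually (by simp)
    filter_upwards [(tendsto_line b v).eventually h] with t ht
    exact ((ht.differentiableAt (by simp)).hasFDerivAt.comp_hasDerivAt t
      (hasDerivAt_line b v t)).add_const R
  · have h : DifferentiableAt ℝ (fun w => fderiv ℝ u w v) b :=
      ((hu.fderiv_right (m := 1) (by norm_num)).differentiableAt (by simp)).clm_apply
        (differentiableAt_const v)
    have h' : HasFDerivAt (fun w => fderiv ℝ u w v) (fderiv ℝ (fun w => fderiv ℝ u w v) b)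
      (b + ((0 : ℝ) : ℂ) * v) := by simpa using h.hasFDerivAt
    exact h'.comp_hasDerivAt 0 (hasDerivAt_line b v 0)

lemma hasD2_line_re {F : ℂ → ℂ} {b : ℂ} (hF : AnalyticAt ℂ F b) (v : ℂ) :
    HasD2 (fun t => (F (b + (t : ℂ) * v)).re) (deriv F b * v).re
      (deriv (deriv F) b * v * v).re := by
  refine ⟨fun t => (deriv F (b + (t : ℂ) * v) * v).re, ?_, by simp, ?_⟩
  · filter_upwards [(tendsto_line b v).eventually hF.eventually_analyticAt] with t ht
    exact Complex.reCLM.hasFDerivAt.comp_hasDerivAt t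
      (ht.differentiableAt.hasDerivAt.comp t (hasDerivAt_line b v t))
  · have h' : HasDerivAt (deriv F) (deriv (deriv F) b) (b + ((0 : ℝ) : ℂ) * v) := by
      simpa using hF.deriv.differentiableAt.hasDerivAt
    exact Complex.reCLM.hasFDerivAt.comp_hasDerivAt 0
      ((h'.comp 0 (hasDerivAt_line b v 0)).mul_const v)

lemma hasD2_line_disc (a b v : ℂ) (ρ : ℝ) :
    HasD2 (fun t => ρ ^ 2 - ‖b + (t : ℂ) * v - a‖ ^ 2)
      (-2 * ((b - a).re * v.re + (b - a).im * v.im)) (-2 * ‖v‖ ^ 2) := by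
  set p := (b - a).re * v.re + (b - a).im * v.im
  have h : (fun t : ℝ => ρ ^ 2 - ‖b + (t : ℂ) * v - a‖ ^ 2) =
      fun t => ρ ^ 2 - (‖b - a‖ ^ 2 + 2 * p * t + ‖v‖ ^ 2 * t ^ 2) := by
    funext t
    simp only [← Complex.normSq_eq_norm_sq, Complex.normSq_apply, p]
    simp
    ring
  rw [h]
  refine ⟨fun t => -2 * p + -2 * ‖v‖ ^ 2 * t, Eventually.of_forall fun t => ?_, by simp, ?_⟩
  · have := ((((hasDerivAt_id t).const_mul (2 * p)).const_add (‖b - a‖ ^ 2)).add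
      (((hasDerivAt_id t).pow 2).const_mul (‖v‖ ^ 2))).const_sub (ρ ^ 2)
    refine this.congr_deriv ?_
    simp
    ring
  · exact (((hasDerivAt_id (0 : ℝ)).const_mul (-2 * ‖v‖ ^ 2)).const_add (-2 * p)).congr_deriv
      (mul_one _)

/-- The operator norm of a real functional on `ℂ` is the modulus of its complex gradient. -/
lemma norm_complex_gradient (L : ℂ →L[ℝ] ℝ) : ‖(L 1 : ℂ) - Complex.I * L Complex.I‖ = ‖L‖ := by
  set f : ℂ := (L 1 : ℂ) - Complex.I * L Complex.I with hf
  have hL : ∀ v : ℂ, L v = (f * v).re := by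
    intro v
    have hv : v = v.re • (1 : ℂ) + v.im • Complex.I := by
      apply Complex.ext <;> simp
    conv_lhs => rw [hv, map_add, map_smul, map_smul]
    simp [hf]
    ring
  apply le_antisymm
  · by_cases h0 : f = 0
    · simp [h0]
    have h1 : L (starRingEnd ℂ f) = ‖f‖ ^ 2 := by
      rw [hL, Complex.mul_conj, Complex.normSq_eq_norm_sq, Complex.ofReal_re]
    have h2 := (le_abs_self _).trans (L.le_opNorm (starRingEnd ℂ f))
    rw [h1, RCLike.norm_conj] at h2
    have : 0 < ‖f‖ := norm_pos_iff.2 h0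
    nlinarith
  · refine L.opNorm_le_bound (norm_nonneg _) fun v => ?_
    rw [hL, ← norm_mul]
    exact Complex.abs_re_le_norm _

lemma harmonicAt_of_harmonicOnC {u : ℂ → ℝ} {s : Set ℂ} (hs : IsOpen s) (hu : HarmonicOnC u s)
    {b : ℂ} (hb : b ∈ s) : HarmonicAt u b := by
  refine ⟨hu.1 b hb, ?_⟩
  filter_upwards [hs.mem_nhds hb] with z hz
  have hd : DifferentiableAt ℝ (fderiv ℝ u) z :=
    ((hu.1 z hz).fderiv_right (m := 1) (by norm_num)).differentiableAt (by simp)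
  have h := hu.2 z hz
  have key : ∀ v : ℂ, fderiv ℝ (fun w => fderiv ℝ u w v) z v = fderiv ℝ (fderiv ℝ u) z v v := by
    intro v
    rw [fderiv_clm_apply hd (differentiableAt_const v)]
    simp
  rw [lapC, key, key] at h
  rw [laplacian_eq_iteratedFDeriv_complexPlane]
  simpa [iteratedFDeriv_two_apply] using h

/-- At an interior local maximum of `w / λ`, where `w = ‖∇u‖ / (u + R)` and
`λ = 2 ρ / (ρ² - ‖z - a‖²)`, one has `w ≤ λ`: the Laplacian of `log (w / λ)` there is
`w² - λ²`. -/
lemma interior_max_bound {Ω : Set ℂ} (hΩo : IsOpen Ω) {u : ℂ → ℝ} (hu : HarmonicOnC u Ω)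
    (hpos : ∀ z ∈ Ω, 0 < u z) {a b : ℂ} {R ρ : ℝ} (hR : 0 < R) (hρ : 0 < ρ) (hb : b ∈ Ω)
    (hbρ : ‖b - a‖ < ρ)
    (hmax : IsLocalMax (fun z => ‖fderiv ℝ u z‖ * (ρ ^ 2 - ‖z - a‖ ^ 2) / (u z + R)) b) :
    ‖fderiv ℝ u b‖ * (ρ ^ 2 - ‖b - a‖ ^ 2) / (u b + R) ≤ 2 * ρ := by
  set f : ℂ → ℂ := fun z => (fderiv ℝ u z 1 : ℂ) - Complex.I * fderiv ℝ u z Complex.I with hf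
  have hnorm : ∀ z, ‖fderiv ℝ u z‖ = ‖f z‖ := fun z => (norm_complex_gradient _).symm
  simp only [hnorm] at hmax ⊢
  have hS : 0 < ρ ^ 2 - ‖b - a‖ ^ 2 := by nlinarith [norm_nonneg (b - a)]
  have hU : 0 < u b + R := add_pos (hpos b hb) hR
  by_cases hf0 : f b = 0
  · simp [hf0]; positivity
  have hfa : AnalyticAt ℂ f b :=
    HarmonicAt.analyticAt_complex_partial (harmonicAt_of_harmonicOnC hΩo hu hb)
  -- A local branch of the logarithm of `f / f b`; its real part is `log ‖f‖` up to a constant.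
  set F : ℂ → ℂ := fun z => Complex.log (f z / f b) with hFdef
  have hFa : AnalyticAt ℂ F b := by
    refine (hfa.div analyticAt_const hf0).clog ?_
    simp [hf0]
  have hFre : ∀ z, (F z).re = Real.log (‖f z‖ / ‖f b‖) := by
    intro z; rw [hFdef]; simp [Complex.log_re]
  set Q : ℂ → ℝ := fun z =>
    (F z).re - Real.log (u z + R) + Real.log (ρ ^ 2 - ‖z - a‖ ^ 2) with hQ
  have hQmax : IsLocalMax Q b := by
    have e1 : ∀ᶠ z in 𝓝 b, f z ≠ 0 := hfa.continuousAt.eventually_ne hf0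
    have e2 : ∀ᶠ z in 𝓝 b, 0 < ρ ^ 2 - ‖z - a‖ ^ 2 := by
      have : ContinuousAt (fun z : ℂ => ρ ^ 2 - ‖z - a‖ ^ 2) b := by fun_prop
      exact this.eventually (lt_mem_nhds hS)
    have hval : ∀ z, f z ≠ 0 → 0 < ρ ^ 2 - ‖z - a‖ ^ 2 → 0 < u z + R →
        Q z = Real.log (‖f z‖ * (ρ ^ 2 - ‖z - a‖ ^ 2) / (u z + R)) - Real.log ‖f b‖ := by
      intro z h1 h2 h3
      have h1' : ‖f z‖ ≠ 0 := norm_ne_zero_iff.2 h1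
      have h0' : ‖f b‖ ≠ 0 := norm_ne_zero_iff.2 hf0
      simp only [hQ, hFre]
      rw [Real.log_div h1' h0', Real.log_div (mul_ne_zero h1' h2.ne') h3.ne',
        Real.log_mul h1' h2.ne']
      ring
    filter_upwards [e1, e2, hΩo.mem_nhds hb, hmax] with z h1 h2 h3 h4
    have h5 : 0 < u z + R := add_pos (hpos z h3) hR
    rw [hval z h1 h2 h5, hval b hf0 hS hU]
    have : 0 < ‖f z‖ := norm_pos_iff.2 h1
    exact sub_le_sub_right (Real.log_le_log (by positivity) h4) _
  have hline : ∀ v : ℂ, IsLocalMax (fun t : ℝ => Q (b + (t : ℂ) * v)) 0 := by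
    intro v
    have := (tendsto_line b v).eventually hQmax
    filter_upwards [this] with t ht
    simpa using ht
  have hD : ∀ v : ℂ, (deriv (deriv F) b * v * v).re
      - (fderiv ℝ (fun w => fderiv ℝ u w v) b v / (u b + R)
        - (fderiv ℝ u b v) ^ 2 / (u b + R) ^ 2)
      + (-2 * ‖v‖ ^ 2 / (ρ ^ 2 - ‖b - a‖ ^ 2)
        - (-2 * ((b - a).re * v.re + (b - a).im * v.im)) ^ 2 / (ρ ^ 2 - ‖b - a‖ ^ 2) ^ 2)
      ≤ 0 := by
    intro v
    have h1 := (hasD2_line_of_contDiffAt (hu.1 b hb) R v).log (by simpa using hU)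
    have h2 := (hasD2_line_disc a b v ρ).log (by simpa using hS)
    have h3 := (((hasD2_line_re hFa v).sub h1).add h2).nonpos_of_isLocalMax (hline v)
    simpa using h3
  have hx := hD 1
  have hy := hD Complex.I
  have hlap := hu.2 b hb
  rw [lapC] at hlap
  have hfsq : ‖f b‖ ^ 2 = fderiv ℝ u b 1 ^ 2 + fderiv ℝ u b Complex.I ^ 2 := by
    rw [← Complex.normSq_eq_norm_sq, Complex.normSq_apply, hf]
    simp
    ring
  have hc : ‖b - a‖ ^ 2 = (b - a).re ^ 2 + (b - a).im ^ 2 := by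
    rw [← Complex.normSq_eq_norm_sq, Complex.normSq_apply]; ring
  have hlap' : fderiv ℝ (fun w => fderiv ℝ u w 1) b 1 / (u b + R)
      + fderiv ℝ (fun w => fderiv ℝ u w Complex.I) b Complex.I / (u b + R) = 0 := by
    rw [← add_div, hlap, zero_div]
  -- The harmonic terms cancel in the sum of the two directions, leaving `w² ≤ λ²`.
  have hsum : ‖f b‖ ^ 2 / (u b + R) ^ 2 ≤ (2 * ρ) ^ 2 / (ρ ^ 2 - ‖b - a‖ ^ 2) ^ 2 := by
    have hF2 : (deriv (deriv F) b * 1 * 1).re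
        + (deriv (deriv F) b * Complex.I * Complex.I).re = 0 := by
      rw [mul_assoc _ Complex.I, Complex.I_mul_I]; simp
    have hlam : (2 * ρ) ^ 2 / (ρ ^ 2 - ‖b - a‖ ^ 2) ^ 2 =
        2 * (2 / (ρ ^ 2 - ‖b - a‖ ^ 2)) + 4 * ‖b - a‖ ^ 2 / (ρ ^ 2 - ‖b - a‖ ^ 2) ^ 2 := by
      field_simp
      ring
    have hsplit : 4 * ‖b - a‖ ^ 2 / (ρ ^ 2 - ‖b - a‖ ^ 2) ^ 2 =
        (-2 * ((b - a).re * (1 : ℂ).re + (b - a).im * (1 : ℂ).im)) ^ 2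
          / (ρ ^ 2 - ‖b - a‖ ^ 2) ^ 2
        + (-2 * ((b - a).re * Complex.I.re + (b - a).im * Complex.I.im)) ^ 2
          / (ρ ^ 2 - ‖b - a‖ ^ 2) ^ 2 := by
      rw [← add_div]
      congr 1
      rw [hc]
      simp only [Complex.one_re, Complex.one_im, Complex.I_re, Complex.I_im]
      ring
    have hneg : -2 / (ρ ^ 2 - ‖b - a‖ ^ 2) = -(2 / (ρ ^ 2 - ‖b - a‖ ^ 2)) := by ring
    rw [hfsq, add_div, hlam, hsplit]
    simp only [norm_one, Complex.norm_I, one_pow, mul_one, hneg] at hx hy hF2 ⊢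
    linarith
  rw [← div_pow, ← div_pow] at hsum
  have h := le_of_sq_le_sq hsum (by positivity)
  rw [div_le_div_iff₀ hU hS] at h
  rw [div_le_iff₀ hU]
  exact h

/-- A priori gradient bound for roof functions of planar exceptional domains:
`‖∇u(z)‖ ≤ 2` throughout `Ω`. -/
theorem roof_gradient_bound (Ω : Set ℂ) (hΩo : IsOpen Ω) (hΩc : IsConnected Ω)
    (hΩne : Ω ≠ univ) (u : ℂ → ℝ) (hu : IsRoofFunctionC Ω u) :
    ∀ z ∈ Ω, ‖fderiv ℝ u z‖ ≤ 2 := by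
  intro a ha
  obtain ⟨huc, huh, hpos, hzero, G, hGc, hGe, hG1⟩ := hu
  set R := u a with hRdef
  have hR : 0 < R := hpos a ha
  set ρ := 2 * R with hρdef
  have hρ : 0 < ρ := by positivity
  set K := closure Ω ∩ closedBall a ρ with hK
  have hKc : IsCompact K := (isCompact_closedBall a ρ).inter_left isClosed_closure
  have haK : a ∈ K := ⟨subset_closure ha, mem_closedBall_self hρ.le⟩
  have hnn : ∀ z ∈ closure Ω, 0 ≤ u z := by
    intro z hz
    by_cases h : z ∈ Ω
    · exact (hpos z h).le
    · exact (hzero z ⟨hz, by rwa [hΩo.interior_eq]⟩).ge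
  set ψ : ℂ → ℝ := fun z => ‖G z‖ * (ρ ^ 2 - ‖z - a‖ ^ 2) / (u z + R) with hψ
  have hψc : ContinuousOn ψ K := by
    have hsub : K ⊆ closure Ω := inter_subset_left
    refine ContinuousOn.div ((hGc.mono hsub).norm.mul (by fun_prop))
      ((huc.mono hsub).add continuousOn_const) fun z hz => ?_
    have := hnn z (hsub hz)
    positivity
  obtain ⟨b, hbK, hbmax⟩ := hKc.exists_isMaxOn ⟨a, haK⟩ hψc
  have hbρ : ‖b - a‖ ≤ ρ := by simpa [dist_eq_norm] using hbK.2
  have hbound : ψ b ≤ 2 * ρ := by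
    rcases hbρ.eq_or_lt with h | h
    · simp only [hψ, h]; simp; positivity
    by_cases hbΩ : b ∈ Ω
    · have hnear : ∀ᶠ z in 𝓝 b, z ∈ Ω ∧ z ∈ K := by
        have hball : ball a ρ ∈ 𝓝 b := isOpen_ball.mem_nhds (by simpa [dist_eq_norm] using h)
        filter_upwards [hΩo.mem_nhds hbΩ, hball] with z h1 h2
        exact ⟨h1, subset_closure h1, ball_subset_closedBall h2⟩
      have := interior_max_bound hΩo huh hpos (a := a) hR hρ hbΩ h (by
        filter_upwards [hnear] with z hz
        have := hbmax hz.2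
        simpa [hψ, hGe z hz.1, hGe b hbΩ] using this)
      simpa [hψ, hGe b hbΩ] using this
    · -- On `∂Ω` the quotient is at most `ρ² / R`, which is `2 ρ` by the choice of `ρ`.
      have hbf : b ∈ frontier Ω := ⟨hbK.1, by rwa [hΩo.interior_eq]⟩
      simp only [hψ, hG1 b hbf, hzero b hbf, one_mul, zero_add]
      rw [div_le_iff₀ hR]
      nlinarith [sq_nonneg ‖b - a‖]
  have hfin : ψ a ≤ 2 * ρ := (hbmax haK).trans hbound
  simp only [hψ, hGe a ha, sub_self, norm_zero] at hfin
  rw [div_le_iff₀ (by positivity), ← hRdef, hρdef] at hfin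
  have hR2 : 0 < R ^ 2 := by positivity
  nlinarith
end

section
/- Let Ω ⊆ ℝ² be open, let u be harmonic on Ω, let R > 0 satisfy u + R > 0 on Ω, and let z₀ ∈ Ω be a point where ∇u(z₀) ≠ 0. Then the function w = ‖∇u‖/(u + R), which is smooth in a neighborhood of z₀, satisfies Δ(log w)(z₀) ≥ w(z₀)², where Δ = ∂²/∂x² + ∂²/∂y² is the Laplacian. -/
/-!
Write `log w = log ‖∇u‖ - log (u + R)`. For harmonic `u`, the function
`F = u_x - i u_y` is holomorphic and `‖F‖ = ‖∇u‖` (`norm_clm_eq`), so `log ‖∇u‖` is harmonic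
wherever `∇u ≠ 0`. The chain rule and `Δu = 0` give
`Δ log (u + R) = -‖∇u‖² / (u + R)² = -w²` (`lapC_log_add`). Hence `Δ (log w) = w²`: the inequality
is in fact an equality in the plane.
-/

open Metric Set

open Filter Topology

/-- At points of `C²` regularity, `lapC` is Mathlib's Laplacian. -/
lemma lapC_eq_laplacian {f : ℂ → ℝ} {z : ℂ} (hf : ContDiffAt ℝ 2 f z) :
    lapC f z = Laplacian.laplacian f z := by
  have hd : DifferentiableAt ℝ (fderiv ℝ f) z :=
    (hf.fderiv_right (m := 1) (by norm_num)).differentiableAt (by norm_num)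
  have key (v : ℂ) : fderiv ℝ (fun w => fderiv ℝ f w v) z v = fderiv ℝ (fderiv ℝ f) z v v := by
    rw [fderiv_clm_apply hd (differentiableAt_const v)]
    simp
  rw [InnerProductSpace.laplacian_eq_iteratedFDeriv_complexPlane]
  simp [lapC, key, iteratedFDeriv_two_apply]

lemma HarmonicOnC.harmonicAt {u : ℂ → ℝ} {Ω : Set ℂ} (hΩ : IsOpen Ω) (hu : HarmonicOnC u Ω)
    {z : ℂ} (hz : z ∈ Ω) : InnerProductSpace.HarmonicAt u z := by
  refine ⟨hu.1 z hz, ?_⟩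
  filter_upwards [hΩ.mem_nhds hz] with y hy
  rw [← lapC_eq_laplacian (hu.1 y hy), hu.2 y hy, Pi.zero_apply]

/-- The functional `L` is the inner product with the conjugate of `L 1 - i L i`, hence the norms
agree. -/
lemma norm_clm_eq (L : ℂ →L[ℝ] ℝ) : ‖L‖ = ‖(L 1 : ℂ) - Complex.I * L Complex.I‖ := by
  have h : L = innerSL ℝ ((L 1 : ℂ) + Complex.I * L Complex.I) := by
    ext v
    have hv : v = v.re • (1 : ℂ) + v.im • Complex.I := by
      simp [Complex.re_add_im]
    conv_lhs => rw [hv, map_add, map_smul, map_smul]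
    simp [Complex.inner]
  conv_lhs => rw [h]
  rw [innerSL_apply_norm, ← Complex.norm_conj]
  simp [sub_eq_add_neg]

lemma norm_clm_sq (L : ℂ →L[ℝ] ℝ) : ‖L‖ ^ 2 = L 1 ^ 2 + L Complex.I ^ 2 := by
  rw [norm_clm_eq, Complex.sq_norm, Complex.normSq_apply]
  simp
  ring

/-- The chain rule `Δ log (u + R) = Δu / (u + R) - ‖∇u‖² / (u + R)²`, with `Δu = 0`. -/
lemma lapC_log_add {u : ℂ → ℝ} {z : ℂ} {R : ℝ} (hu : ContDiffAt ℝ 2 u z) (hΔ : lapC u z = 0)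
    (hpos : 0 < u z + R) :
    lapC (fun y => Real.log (u y + R)) z = -(‖fderiv ℝ u z‖ / (u z + R)) ^ 2 := by
  have hd : DifferentiableAt ℝ (fderiv ℝ u) z :=
    (hu.fderiv_right (m := 1) (by norm_num)).differentiableAt (by norm_num)
  have hu1 : DifferentiableAt ℝ u z := hu.differentiableAt (by norm_num)
  have hev : ∀ᶠ y in 𝓝 z, DifferentiableAt ℝ u y ∧ 0 < u y + R := by
    refine Filter.Eventually.and ?_ ?_
    · filter_upwards [hu.eventually (by simp)] with y hy
      exact hy.differentiableAt (by norm_num)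
    · exact (hu1.continuousAt.add continuousAt_const).eventually (lt_mem_nhds hpos)
  have key (v : ℂ) : fderiv ℝ (fun w => fderiv ℝ (fun y => Real.log (u y + R)) w v) z v =
      (u z + R)⁻¹ * fderiv ℝ (fun w => fderiv ℝ u w v) z v
        - (fderiv ℝ u z v) ^ 2 / (u z + R) ^ 2 := by
    have h1 : (fun w => fderiv ℝ (fun y => Real.log (u y + R)) w v) =ᶠ[𝓝 z]
        fun w => (u w + R)⁻¹ * fderiv ℝ u w v := by
      filter_upwards [hev] with y hy
      rw [((hy.1.hasFDerivAt.add_const R).log hy.2.ne').fderiv]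
      simp
    rw [h1.fderiv_eq]
    have hi : HasFDerivAt (fun w => (u w + R)⁻¹) (-((u z + R) ^ 2)⁻¹ • fderiv ℝ u z) z :=
      (hasDerivAt_inv hpos.ne').comp_hasFDerivAt z (hu1.hasFDerivAt.add_const R)
    have hdv : DifferentiableAt ℝ (fun w => fderiv ℝ u w v) z :=
      hd.clm_apply (differentiableAt_const v)
    rw [(hi.fun_mul hdv.hasFDerivAt).fderiv]
    simp
    ring
  have h0 := hΔ
  unfold lapC at h0 ⊢
  rw [key, key, div_pow, norm_clm_sq]
  linear_combination (u z + R)⁻¹ * h0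

/-- The key differential inequality in the proof of the gradient bound: for `u` harmonic
on `Ω ⊆ ℝ²` with `u + R > 0`, the function `w = ‖∇u‖/(u+R)` satisfies
`Δ(log w) ≥ w²` at any point where `∇u ≠ 0`. -/
theorem log_w_superharmonic_inequality (Ω : Set ℂ) (hΩ : IsOpen Ω)
    (u : ℂ → ℝ) (hu : HarmonicOnC u Ω) (R : ℝ) (hR : 0 < R)
    (hpos : ∀ z ∈ Ω, 0 < u z + R)
    (z₀ : ℂ) (hz₀ : z₀ ∈ Ω) (hgrad : fderiv ℝ u z₀ ≠ 0) :
    (fun z => ‖fderiv ℝ u z‖ / (u z + R)) z₀ ^ 2 ≤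
      lapC (fun z => Real.log (‖fderiv ℝ u z‖ / (u z + R))) z₀ := by
  have hu2 := hu.1 z₀ hz₀
  have hg : ContDiffAt ℝ 2 (fun y => Real.log (u y + R)) z₀ :=
    (hu2.add contDiffAt_const).log (hpos z₀ hz₀).ne'
  have hh : InnerProductSpace.HarmonicAt (fun z => Real.log ‖fderiv ℝ u z‖) z₀ := by
    simp only [norm_clm_eq]
    refine (HarmonicAt.analyticAt_complex_partial
      (hu.harmonicAt hΩ hz₀)).harmonicAt_log_norm ?_
    rw [← norm_ne_zero_iff, ← norm_clm_eq]
    exact norm_ne_zero_iff.2 hgrad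
  have hne : ∀ᶠ z in 𝓝 z₀, fderiv ℝ u z ≠ 0 :=
    (hu2.fderiv_right (m := 1) (by norm_num)).continuousAt.eventually_ne hgrad
  have heq : (fun z => Real.log (‖fderiv ℝ u z‖ / (u z + R))) =ᶠ[𝓝 z₀]
      (fun z => Real.log ‖fderiv ℝ u z‖) - fun z => Real.log (u z + R) := by
    filter_upwards [hne, hΩ.mem_nhds hz₀] with z hz hzΩ
    exact Real.log_div (norm_ne_zero_iff.2 hz) (hpos z hzΩ).ne'
  rw [lapC_eq_laplacian ((hh.1.sub hg).congr_of_eventuallyEq heq),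
    (InnerProductSpace.laplacian_congr_nhds heq).eq_of_nhds,
    hh.1.laplacian_sub hg, hh.2.eq_of_nhds, ← lapC_eq_laplacian hg,
    lapC_log_add hu2 (hu.2 z₀ hz₀) (hpos z₀ hz₀)]
  simp
end

section
/- Let Ω ⊊ ℂ be an exceptional domain with classical roof function u, and let F : Ω → ℂ be the holomorphic function F(z) = (∂u/∂x − i ∂u/∂y)/2 (holomorphic because u is harmonic). Suppose V ⊆ ℂ is an open set containing ∂Ω and S : V → ℂ is holomorphic with S(z) equal to the complex conjugate of z for every z ∈ ∂Ω (a Schwarz function for ∂Ω). Then there is an open set W with ∂Ω ⊆ W ⊆ V such that 4·F(z)² = −S′(z) for all z ∈ W ∩ Ω; in particular the holomorphic function −4F² defined on all of Ω provides an analytic continuation of S′ from W ∩ Ω throughout Ω. -/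
/-!
The statement is local at a point `z₀ ∈ ∂Ω`, and no regularity of `∂Ω` is assumed. The Schwarz
function supplies it: for suitable `a`, the holomorphic map
`z ↦ a (z - z₀) + conj a (S z - S z₀)` has nonzero derivative at `z₀` and is real on `∂Ω`, so its local
inverse `ψ` parametrises a neighbourhood of `z₀` by a disc in which `∂Ω` corresponds to a subset of
the real diameter (`exists_isStraightening`). By connectedness each open half-disc is mapped into `Ω`
or into the complement of `closure Ω`.

They cannot both lie in the complement, since `z₀` is in the closure of the open set `Ω`. Nor can both
lie in `Ω`: the roof function is differentiable up to the diameter from each side, with differential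
given by the extension `G` of `du`, and its minimum at `z₀` would force `G z₀ = 0`
(`IsStraightening.not_both_sides`), against `‖G z₀‖ = 1`. So, up to rotating the disc by `π`, the
upper half-disc is mapped into `Ω`, the lower one outside, and the diameter onto part of `∂Ω`.

On the diameter, `du` annihilates the tangent `p = ψ'` because `u = 0` there, and differentiating
`S ∘ ψ = conj ψ` gives `S' p = conj p`; together with `‖du‖ = 1` this yields
`(u_x - i u_y)² = -conj p / p = -S'`. Thus `((u_x - i u_y)² + S') ∘ ψ` is holomorphic in the half-disc,
continuous up to the boundary and zero on the diameter. An exponential weight in the maximum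
principle shows that it vanishes on a smaller half-disc (`eq_zero_of_eq_zero_on_diameter`).
-/

open Metric Set

/-! ### Straightening the boundary -/

open Filter Topology

/-- The open upper half of the disc of radius `r` about `0`. -/
def upperHalfDisc (r : ℝ) : Set ℂ := {w | 0 < w.im} ∩ ball 0 r

/-- `ψ` is a local biholomorphic parametrisation of a neighbourhood of `z₀` in `V` by a disc about
`0`, under which the part of `∂Ω` that it covers lies on the real axis. -/
structure IsStraightening (Ω V : Set ℂ) (z₀ : ℂ) (ψ : ℂ → ℂ) (r : ℝ) : Prop where
  pos : 0 < r
  diff : ∀ w ∈ ball (0 : ℂ) r, DifferentiableAt ℂ ψ w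
  deriv_ne : ∀ w ∈ ball (0 : ℂ) r, deriv ψ w ≠ 0
  map_zero : ψ 0 = z₀
  mem : ∀ w ∈ ball (0 : ℂ) r, ψ w ∈ V
  im_eq_zero : ∀ w ∈ ball (0 : ℂ) r, ψ w ∈ frontier Ω → w.im = 0

lemma isOpen_upperHalfDisc (r : ℝ) : IsOpen (upperHalfDisc r) :=
  (isOpen_lt continuous_const Complex.continuous_im).inter isOpen_ball

lemma convex_upperHalfDisc (r : ℝ) : Convex ℝ (upperHalfDisc r) :=
  (convex_halfSpace_im_gt 0).inter (convex_ball 0 r)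

lemma closure_upperHalfDisc_subset (r : ℝ) :
    closure (upperHalfDisc r) ⊆ {w | 0 ≤ w.im} ∩ closedBall 0 r := by
  apply closure_minimal
  · exact inter_subset_inter (fun w (hw : 0 < w.im) => hw.le) ball_subset_closedBall
  · exact (isClosed_le continuous_const Complex.continuous_im).inter isClosed_closedBall

lemma mem_closure_upperHalfDisc {r : ℝ} {w : ℂ} (hw : w ∈ ball (0 : ℂ) r) (h : 0 ≤ w.im) :
    w ∈ closure (upperHalfDisc r) := by
  have hc : Tendsto (fun t : ℝ => w + t * Complex.I) (𝓝[>] 0) (𝓝 w) := by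
    have : Continuous fun t : ℝ => w + t * Complex.I := by fun_prop
    simpa using (this.tendsto 0).mono_left nhdsWithin_le_nhds
  refine mem_closure_of_tendsto hc ?_
  filter_upwards [hc.eventually (isOpen_ball.mem_nhds hw), self_mem_nhdsWithin] with t ht ht0
  refine ⟨?_, ht⟩
  have : 0 < t := ht0
  simp
  linarith

/-- A Schwarz function yields straightening charts: if `a` is chosen with
`a + conj a * S'(z₀) ≠ 0`, then `z ↦ a (z - z₀) + conj a (S z - S z₀)` is locally invertible at `z₀`
and equals `2 Re (a (z - z₀))`, hence is real, on `∂Ω`. -/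
lemma exists_isStraightening {Ω V : Set ℂ} (hVo : IsOpen V) {S : ℂ → ℂ}
    (hS : DifferentiableOn ℂ S V) (hSz : ∀ z ∈ frontier Ω, S z = (starRingEnd ℂ) z) {z₀ : ℂ}
    (hz₀ : z₀ ∈ frontier Ω) (hz₀V : z₀ ∈ V) :
    ∃ ψ r, IsStraightening Ω V z₀ ψ r := by
  obtain ⟨a, ha⟩ : ∃ a : ℂ, a + (starRingEnd ℂ) a * deriv S z₀ ≠ 0 := by
    by_cases h : deriv S z₀ = -1
    · refine ⟨Complex.I, ?_⟩
      rw [h, Complex.conj_I]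
      simp [← two_mul]
    · refine ⟨1, fun h' => h ?_⟩
      simp at h'
      linear_combination h'
  set φ : ℂ → ℂ := fun z => a * (z - z₀) + (starRingEnd ℂ) a * (S z - S z₀) with hφ
  have hSA : AnalyticAt ℂ S z₀ := hS.analyticAt (hVo.mem_nhds hz₀V)
  have hφA : AnalyticAt ℂ φ z₀ := by fun_prop
  have hc : ContDiffAt ℂ 1 φ z₀ := hφA.contDiffAt
  have hd : HasDerivAt φ (a + (starRingEnd ℂ) a * deriv S z₀) z₀ := by
    have h1 := ((hasDerivAt_id z₀).sub_const z₀).const_mul a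
    have h2 := (hSA.differentiableAt.hasDerivAt.sub_const (S z₀)).const_mul ((starRingEnd ℂ) a)
    exact (h1.add h2).congr_deriv (by simp)
  have hφ0 : φ z₀ = 0 := by simp [hφ]
  have hds : HasStrictDerivAt φ (a + (starRingEnd ℂ) a * deriv S z₀) z₀ :=
    hc.hasStrictDerivAt' hd one_ne_zero
  have hdf := hds.hasStrictFDerivAt_equiv ha
  set ψ := hc.localInverse hdf.hasFDerivAt one_ne_zero with hψ
  have hψ0 : ψ 0 = z₀ := by
    rw [← hφ0]; exact hc.localInverse_apply_image hdf.hasFDerivAt one_ne_zero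
  have hψc : ContDiffAt ℂ 1 ψ 0 := by
    rw [← hφ0]; exact hc.to_localInverse hdf.hasFDerivAt one_ne_zero
  have hright : ∀ᶠ w in 𝓝 (0 : ℂ), φ (ψ w) = w := by
    rw [← hφ0]
    exact (hc.hasStrictFDerivAt' hdf.hasFDerivAt one_ne_zero).eventually_right_inverse
  have hψV : ∀ᶠ w in 𝓝 (0 : ℂ), ψ w ∈ V :=
    hψc.continuousAt.eventually (by rw [hψ0]; exact hVo.mem_nhds hz₀V)
  have hψd : ∀ᶠ w in 𝓝 (0 : ℂ), DifferentiableAt ℂ ψ w :=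
    (hψc.eventually (by simp)).mono fun w hw => hw.differentiableAt one_ne_zero
  obtain ⟨r, hr, hball⟩ := Metric.eventually_nhds_iff_ball.1
    (hright.eventually_nhds.and (hψV.and hψd))
  refine ⟨ψ, r, hr, fun w hw => (hball w hw).2.2, fun w hw h0 => ?_, hψ0,
    fun w hw => (hball w hw).2.1, fun w hw hwf => ?_⟩
  · obtain ⟨h1, h2, h3⟩ := hball w hw
    have hφd : DifferentiableAt ℂ φ (ψ w) := by
      have := hS.differentiableAt (hVo.mem_nhds h2)
      fun_prop
    have h4 : HasDerivAt (fun w => φ (ψ w)) (deriv φ (ψ w) * deriv ψ w) w :=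
      hφd.hasDerivAt.comp w h3.hasDerivAt
    have h5 : HasDerivAt (fun w => φ (ψ w)) 1 w := (hasDerivAt_id w).congr_of_eventuallyEq h1
    have := h4.unique h5
    rw [h0] at this
    simp at this
  · have h1 := (hball w hw).1.self_of_nhds
    rw [← h1, hφ]
    simp only [hSz _ hwf, hSz _ hz₀]
    simp
    ring

namespace IsStraightening

variable {Ω V : Set ℂ} {z₀ : ℂ} {ψ : ℂ → ℂ} {r R : ℝ}

lemma mono (h : IsStraightening Ω V z₀ ψ R) (hr : 0 < r) (hrR : r ≤ R) :
    IsStraightening Ω V z₀ ψ r :=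
  ⟨hr, fun w hw => h.diff w (ball_subset_ball hrR hw),
    fun w hw => h.deriv_ne w (ball_subset_ball hrR hw), h.map_zero,
    fun w hw => h.mem w (ball_subset_ball hrR hw),
    fun w hw => h.im_eq_zero w (ball_subset_ball hrR hw)⟩

/-- Rotating the parameter disc by `π` exchanges the two half-discs. -/
lemma neg (h : IsStraightening Ω V z₀ ψ r) : IsStraightening Ω V z₀ (fun w => ψ (-w)) r := by
  have hb : ∀ w ∈ ball (0 : ℂ) r, -w ∈ ball (0 : ℂ) r := by simp
  have hd : ∀ w ∈ ball (0 : ℂ) r, HasDerivAt (fun w => ψ (-w)) (-deriv ψ (-w)) w := by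
    intro w hw
    exact ((h.diff _ (hb w hw)).hasDerivAt.comp w (hasDerivAt_neg w)).congr_deriv (by simp)
  refine ⟨h.pos, fun w hw => (hd w hw).differentiableAt, fun w hw => ?_, by simpa using h.map_zero,
    fun w hw => h.mem _ (hb w hw), fun w hw hf => by simpa using h.im_eq_zero _ (hb w hw) hf⟩
  rw [(hd w hw).deriv]
  exact neg_ne_zero.2 (h.deriv_ne _ (hb w hw))

/-- The image of each open half-disc avoids `∂Ω`, so by connectedness it lies on one side. -/
lemma subset_or_disjoint (h : IsStraightening Ω V z₀ ψ r) (hΩo : IsOpen Ω) :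
    MapsTo ψ (upperHalfDisc r) Ω ∨ MapsTo ψ (upperHalfDisc r) (closure Ω)ᶜ := by
  have hc : ContinuousOn ψ (upperHalfDisc r) := fun w hw =>
    (h.diff w hw.2).continuousAt.continuousWithinAt
  have hp := (convex_upperHalfDisc r).isPreconnected.image ψ hc
  have := hp.subset_or_subset hΩo isClosed_closure.isOpen_compl
    (disjoint_compl_right.mono_left subset_closure) (by
      rintro _ ⟨w, hw, rfl⟩
      by_contra hcon
      simp only [mem_union, mem_compl_iff, not_or, not_not] at hcon
      have : ψ w ∈ frontier Ω := by
        rw [hΩo.frontier_eq]; exact ⟨hcon.2, hcon.1⟩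
      exact hw.1.ne' (h.im_eq_zero w hw.2 this))
  simpa [mapsTo_iff_image_subset] using this

lemma map_nhds (h : IsStraightening Ω V z₀ ψ r) {w : ℂ} (hw : w ∈ ball (0 : ℂ) r) :
    map ψ (𝓝 w) = 𝓝 (ψ w) := by
  have hA : AnalyticAt ℂ ψ w := by
    have : DifferentiableOn ℂ ψ (ball 0 r) := fun w hw => (h.diff w hw).differentiableWithinAt
    exact this.analyticAt (isOpen_ball.mem_nhds hw)
  exact hA.hasStrictDerivAt.map_nhds_eq (h.deriv_ne w hw)

lemma mapsTo_closure (h : IsStraightening Ω V z₀ ψ R) (hrR : r < R)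
    (hU : MapsTo ψ (upperHalfDisc r) Ω) : MapsTo ψ (closure (upperHalfDisc r)) (closure Ω) := by
  refine hU.closure_of_continuousOn fun w hw => ?_
  exact (h.diff w (closedBall_subset_ball hrR
    (closure_upperHalfDisc_subset r hw).2)).continuousAt.continuousWithinAt

end IsStraightening

/-! ### Boundary uniqueness and the complex gradient -/

/-- A holomorphic function on a half-disc, continuous up to the boundary and zero on the diameter,
vanishes on the concentric half-disc of half the radius. On the circular arc,
`Re (r + i w)² = (r - y)² - x² ≤ 0`, while this quantity is positive for `‖w‖ < r / 2`; hence the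
maximum principle for `g(w) exp(n (r + i w)²)` gives `‖g w‖ ≤ M exp(-n Re (r + i w)²)` for all `n`,
where `M` bounds `g`. -/
lemma eq_zero_of_eq_zero_on_diameter {r : ℝ} {g : ℂ → ℂ}
    (hg : DiffContOnCl ℂ g (upperHalfDisc r))
    (h0 : ∀ w ∈ closure (upperHalfDisc r), w.im = 0 → g w = 0)
    {w : ℂ} (hw : w ∈ upperHalfDisc (r / 2)) : g w = 0 := by
  have hwn : ‖w‖ < r / 2 := by simpa using hw.2
  have hr : 0 < r := by linarith [norm_nonneg w]
  have hbdd : Bornology.IsBounded (upperHalfDisc r) := isBounded_ball.subset inter_subset_right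
  obtain ⟨M, hM⟩ := (hbdd.isCompact_closure).exists_bound_of_continuousOn hg.continuousOn
  have hwU : w ∈ closure (upperHalfDisc r) :=
    subset_closure ⟨hw.1, ball_subset_ball (by linarith) hw.2⟩
  have hM0 : 0 ≤ M := (norm_nonneg _).trans (hM w hwU)
  have hre : ∀ z : ℂ, (((r : ℂ) + Complex.I * z) ^ 2).re = (r - z.im) ^ 2 - z.re ^ 2 := by
    intro z; simp [sq]
    ring
  set c := (r - w.im) ^ 2 - w.re ^ 2 with hc
  have hcpos : 0 < c := by
    have h1 := Complex.abs_re_le_norm w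
    have h2 := Complex.abs_im_le_norm w
    have h3 := abs_le.1 h1
    have h4 := abs_le.1 h2
    have h5 : 0 < (r - w.im - w.re) * (r - w.im + w.re) :=
      mul_pos (by linarith) (by linarith)
    rw [hc]; linarith
  have key : ∀ n : ℕ, ‖g w‖ * Real.exp (n * c) ≤ M := by
    intro n
    have hd : DiffContOnCl ℂ (fun z => g z * Complex.exp (n * ((r : ℂ) + Complex.I * z) ^ 2))
        (upperHalfDisc r) := by
      have : Differentiable ℂ fun z : ℂ => Complex.exp (n * ((r : ℂ) + Complex.I * z) ^ 2) := by
        fun_prop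
      exact hg.smul this.diffContOnCl
    have hn : ∀ z : ℂ, ‖g z * Complex.exp (n * ((r : ℂ) + Complex.I * z) ^ 2)‖
        = ‖g z‖ * Real.exp (n * ((r - z.im) ^ 2 - z.re ^ 2)) := by
      intro z
      rw [norm_mul, Complex.norm_exp, ← hre z, ← Complex.ofReal_natCast n, Complex.re_ofReal_mul]
    have := Complex.norm_le_of_forall_mem_frontier_norm_le hbdd hd (C := M) (fun z hz => ?_) hwU
    · rwa [hn] at this
    · rw [hn]
      have hzc := frontier_subset_closure hz
      have hz' := closure_upperHalfDisc_subset r hzc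
      by_cases him : z.im = 0
      · rw [h0 z hzc him]; simpa using hM0
      · have hzpos : 0 < z.im := lt_of_le_of_ne hz'.1 (Ne.symm him)
        have hnorm : ‖z‖ = r := by
          refine le_antisymm (by simpa using hz'.2) (not_lt.1 fun hlt => ?_)
          rw [(isOpen_upperHalfDisc r).frontier_eq] at hz
          exact hz.2 ⟨hzpos, by simpa using hlt⟩
        have hsq : z.re ^ 2 + z.im ^ 2 = r ^ 2 := by
          rw [← hnorm, Complex.sq_norm, Complex.normSq_apply]; ring
        have hle : z.im ≤ r := hnorm ▸ Complex.im_le_norm z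
        have hexp : Real.exp (n * ((r - z.im) ^ 2 - z.re ^ 2)) ≤ 1 := by
          rw [Real.exp_le_one_iff]
          refine mul_nonpos_of_nonneg_of_nonpos n.cast_nonneg ?_
          nlinarith [mul_nonneg hzpos.le (sub_nonneg.2 hle)]
        calc ‖g z‖ * Real.exp (n * ((r - z.im) ^ 2 - z.re ^ 2)) ≤ M * 1 :=
              mul_le_mul (hM z hzc) hexp (Real.exp_pos _).le hM0
          _ = M := mul_one M
  by_contra hne
  have hpos : 0 < ‖g w‖ := norm_pos_iff.2 hne
  have ht : Tendsto (fun n : ℕ => ‖g w‖ * Real.exp (n * c)) atTop atTop :=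
    (Real.tendsto_exp_atTop.comp
      (tendsto_natCast_atTop_atTop.atTop_mul_const hcpos)).const_mul_atTop hpos
  obtain ⟨n, hn⟩ := (ht.eventually_gt_atTop M).exists
  exact absurd (key n) (not_le.2 hn)

/-- `u_x - i u_y`, read off from the differential `L = du`; the gradient is its conjugate. -/
noncomputable def complexGrad (L : ℂ →L[ℝ] ℝ) : ℂ := (L 1 : ℂ) - Complex.I * (L Complex.I : ℂ)

lemma apply_eq_re_complexGrad (L : ℂ →L[ℝ] ℝ) (h : ℂ) : L h = (complexGrad L * h).re := by
  have : h = h.re • (1 : ℂ) + h.im • Complex.I := by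
    simp
  conv_lhs => rw [this, map_add, map_smul, map_smul]
  simp [complexGrad]
  ring

lemma norm_complexGrad (L : ℂ →L[ℝ] ℝ) : ‖complexGrad L‖ = ‖L‖ := by
  have : L = innerSL ℝ ((starRingEnd ℂ) (complexGrad L)) := by
    ext h
    rw [apply_eq_re_complexGrad]
    simp [Complex.inner, mul_comm]
  conv_rhs => rw [this]
  rw [innerSL_apply_norm, RCLike.norm_conj]

/-- At a boundary point with tangent `p`, a unit gradient orthogonal to `p` satisfies
`(u_x - i u_y)² = -conj p / p`, and `conj p / p` is the derivative of the Schwarz function. -/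
lemma complexGrad_sq_add_eq_zero {L : ℂ →L[ℝ] ℝ} (hL : ‖L‖ = 1) {p s : ℂ} (hp : p ≠ 0)
    (hLp : L p = 0) (hs : s * p = (starRingEnd ℂ) p) : complexGrad L ^ 2 + s = 0 := by
  set c := complexGrad L with hc
  have h1 : c * (starRingEnd ℂ) c = 1 := by
    rw [Complex.mul_conj, Complex.normSq_eq_norm_sq, hc, norm_complexGrad, hL]; simp
  have h2 : c * p + (starRingEnd ℂ) c * (starRingEnd ℂ) p = 0 := by
    rw [← map_mul, Complex.add_conj, hc, ← apply_eq_re_complexGrad, hLp]; simp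
  have : (c ^ 2 + s) * p = 0 := by
    linear_combination c * h2 + hs - (starRingEnd ℂ) p * h1
  exact (mul_eq_zero.1 this).resolve_right hp

lemma differentiableAt_complexGrad_fderiv {Ω : Set ℂ} (hΩo : IsOpen Ω) {u : ℂ → ℝ}
    (hu : HarmonicOnC u Ω) {z : ℂ} (hz : z ∈ Ω) :
    DifferentiableAt ℂ (fun w => complexGrad (fderiv ℝ u w)) z := by
  refine HarmonicAt.differentiableAt_complex_partial ⟨hu.1 z hz, ?_⟩
  filter_upwards [hΩo.mem_nhds hz] with w hw
  have hd : DifferentiableAt ℝ (fderiv ℝ u) w :=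
    ((hu.1 w hw).fderiv_right (m := 1) (by norm_num)).differentiableAt one_ne_zero
  have h : ∀ v : ℂ, fderiv ℝ (fun y => fderiv ℝ u y v) w v = fderiv ℝ (fderiv ℝ u) w v v := by
    intro v
    rw [fderiv_clm_apply hd (differentiableAt_const v)]
    simp
  have := hu.2 w hw
  rw [lapC, h, h] at this
  rw [InnerProductSpace.laplacian_eq_iteratedFDeriv_complexPlane]
  simpa [iteratedFDeriv_two_apply] using this

/-! ### Boundary behaviour of the roof function in a straightening chart -/

namespace IsStraightening

variable {Ω V : Set ℂ} {z₀ : ℂ} {ψ : ℂ → ℂ} {r R : ℝ} {u : ℂ → ℝ} {G : ℂ → (ℂ →L[ℝ] ℝ)}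

/-- The pulled-back roof function is differentiable up to the boundary of the half-disc, with
differential given by the continuous extension `G` of `du`. -/
lemma hasFDerivWithinAt_comp (h : IsStraightening Ω V z₀ ψ R) (hrR : r < R)
    (hU : MapsTo ψ (upperHalfDisc r) Ω) (huc : ContinuousOn u (closure Ω))
    (hud : ∀ z ∈ Ω, DifferentiableAt ℝ u z) (hGc : ContinuousOn G (closure Ω))
    (hGd : ∀ z ∈ Ω, G z = fderiv ℝ u z) {x : ℂ} (hx : x ∈ closure (upperHalfDisc r)) :
    HasFDerivWithinAt (fun w => u (ψ w)) ((G (ψ x)).comp (deriv ψ x • (1 : ℂ →L[ℝ] ℂ)))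
      (closure (upperHalfDisc r)) x := by
  have hR : ∀ y ∈ closure (upperHalfDisc r), y ∈ ball (0 : ℂ) R := fun y hy =>
    closedBall_subset_ball hrR (closure_upperHalfDisc_subset r hy).2
  have hcl := h.mapsTo_closure hrR hU
  have hψc : ∀ y ∈ closure (upperHalfDisc r), ContinuousWithinAt ψ (upperHalfDisc r) y :=
    fun y hy => (h.diff y (hR y hy)).continuousAt.continuousWithinAt
  have hd : ∀ y ∈ upperHalfDisc r, HasFDerivAt (fun w => u (ψ w))
      ((G (ψ y)).comp (deriv ψ y • (1 : ℂ →L[ℝ] ℂ))) y := by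
    intro y hy
    have h1 := (hud _ (hU hy)).hasFDerivAt
    rw [← hGd _ (hU hy)] at h1
    exact h1.comp y (h.diff y (hR y (subset_closure hy))).hasDerivAt.complexToReal_fderiv
  refine hasFDerivWithinAt_closure_of_tendsto_fderiv
    (fun y hy => (hd y hy).differentiableAt.differentiableWithinAt)
    (convex_upperHalfDisc r) (isOpen_upperHalfDisc r) (fun y hy => ?_) ?_
  · exact (huc _ (hcl hy)).comp (hψc y hy) (hU.mono_right subset_closure)
  · have hψ' : ContinuousAt (deriv ψ) x := by
      have hdo : DifferentiableOn ℂ ψ (ball 0 R) :=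
        fun w hw => (h.diff w hw).differentiableWithinAt
      exact (hdo.analyticAt (isOpen_ball.mem_nhds (hR x hx))).deriv.continuousAt
    have hG : ContinuousWithinAt (fun y => G (ψ y)) (upperHalfDisc r) x :=
      (hGc _ (hcl hx)).comp (hψc x hx) (hU.mono_right subset_closure)
    have ht : ContinuousWithinAt (fun y => (G (ψ y)).comp (deriv ψ y • (1 : ℂ →L[ℝ] ℂ)))
        (upperHalfDisc r) x :=
      hG.clm_comp (hψ'.continuousWithinAt.smul continuousWithinAt_const)
    refine Tendsto.congr' ?_ ht
    filter_upwards [self_mem_nhdsWithin] with y hy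
    exact (hd y hy).fderiv.symm

/-- The roof function has a minimum at a boundary point, so its differential there is nonnegative in
directions pointing into the half-disc. -/
lemma apply_nonneg (h : IsStraightening Ω V z₀ ψ R) (hr : 0 < r) (hrR : r < R)
    (hU : MapsTo ψ (upperHalfDisc r) Ω) (huc : ContinuousOn u (closure Ω))
    (hud : ∀ z ∈ Ω, DifferentiableAt ℝ u z) (hGc : ContinuousOn G (closure Ω))
    (hGd : ∀ z ∈ Ω, G z = fderiv ℝ u z) (hu0 : ∀ z ∈ closure Ω, 0 ≤ u z) (huz : u z₀ = 0)
    {y : ℂ} (hy : 0 < y.im) : 0 ≤ G z₀ (deriv ψ 0 * y) := by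
  have h0 : (0 : ℂ) ∈ closure (upperHalfDisc r) :=
    mem_closure_upperHalfDisc (mem_ball_self hr) (by simp)
  have hd := h.hasFDerivWithinAt_comp hrR hU huc hud hGc hGd h0
  have hmin : IsLocalMinOn (fun w => u (ψ w)) (closure (upperHalfDisc r)) 0 := by
    filter_upwards [self_mem_nhdsWithin] with w hw
    rw [h.map_zero, huz]
    exact hu0 _ (h.mapsTo_closure hrR hU hw)
  have hc : Tendsto (fun t : ℝ => (0 : ℂ) + t • y) (𝓝[>] 0) (𝓝 0) := by
    have : Continuous fun t : ℝ => (0 : ℂ) + t • y := by fun_prop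
    simpa using (this.tendsto 0).mono_left nhdsWithin_le_nhds
  have hmem : y ∈ posTangentConeAt (closure (upperHalfDisc r)) 0 := by
    refine mem_posTangentConeAt_of_frequently_mem (Eventually.frequently ?_)
    filter_upwards [hc.eventually (ball_mem_nhds 0 hr), self_mem_nhdsWithin] with t ht ht0
    refine subset_closure ⟨?_, ht⟩
    have : 0 < t := ht0
    simpa using mul_pos this hy
  simpa [h.map_zero] using hmin.hasFDerivWithinAt_nonneg hd hmem

/-- If `Ω` lies on both sides of its boundary, then the zero `z₀` of `u` is an interior minimum, so the
differential vanishes there. -/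
lemma not_both_sides (h : IsStraightening Ω V z₀ ψ R) (hr : 0 < r) (hrR : r < R)
    (hU : MapsTo ψ (upperHalfDisc r) Ω) (hL : MapsTo (fun w => ψ (-w)) (upperHalfDisc r) Ω)
    (huc : ContinuousOn u (closure Ω))
    (hud : ∀ z ∈ Ω, DifferentiableAt ℝ u z) (hGc : ContinuousOn G (closure Ω))
    (hGd : ∀ z ∈ Ω, G z = fderiv ℝ u z) (hu0 : ∀ z ∈ closure Ω, 0 ≤ u z) (huz : u z₀ = 0) :
    G z₀ = 0 := by
  have hderiv : deriv (fun w => ψ (-w)) 0 = -deriv ψ 0 := by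
    rw [deriv_comp_neg]; simp
  have key : ∀ y : ℂ, 0 < y.im → G z₀ (deriv ψ 0 * y) = 0 := by
    intro y hy
    have h1 := h.apply_nonneg hr hrR hU huc hud hGc hGd hu0 huz hy
    have h2 := h.neg.apply_nonneg hr hrR hL huc hud hGc hGd hu0 huz hy
    rw [hderiv, neg_mul, map_neg] at h2
    linarith
  have hI := key Complex.I (by simp)
  have h1I := key (1 + Complex.I) (by simp)
  have h1 : G z₀ (deriv ψ 0 * 1) = 0 := by
    rw [mul_add, map_add, hI, add_zero] at h1I; exact h1I
  have hne := h.deriv_ne 0 (mem_ball_self h.pos)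
  ext v
  have hv : v = (v / deriv ψ 0).re • (deriv ψ 0 * 1)
      + (v / deriv ψ 0).im • (deriv ψ 0 * Complex.I) := by
    have : v = deriv ψ 0 * (((v / deriv ψ 0).re : ℂ) + (v / deriv ψ 0).im * Complex.I) := by
      rw [Complex.re_add_im]; field_simp
    conv_lhs => rw [this]
    simp only [Complex.real_smul]
    ring
  rw [hv, map_add, map_smul, map_smul, h1, hI]
  simp

lemma notMem_of_mapsTo_compl (h : IsStraightening Ω V z₀ ψ r) (hΩo : IsOpen Ω)
    (hU : MapsTo ψ (upperHalfDisc r) (closure Ω)ᶜ) {w : ℂ} (hw : w ∈ ball (0 : ℂ) r)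
    (him : 0 ≤ w.im) : ψ w ∉ Ω := by
  intro hψ
  obtain ⟨y, hy1, hy2⟩ := mem_closure_iff_nhds.1 (mem_closure_upperHalfDisc hw him) _
    ((h.diff w hw).continuousAt.preimage_mem_nhds (hΩo.mem_nhds hψ))
  exact hU hy2 (subset_closure hy1)

lemma not_disjoint_both (h : IsStraightening Ω V z₀ ψ r) (hΩo : IsOpen Ω)
    (hz₀ : z₀ ∈ frontier Ω)
    (hU : MapsTo ψ (upperHalfDisc r) (closure Ω)ᶜ)
    (hL : MapsTo (fun w => ψ (-w)) (upperHalfDisc r) (closure Ω)ᶜ) : False := by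
  have hf : ∃ᶠ z in 𝓝 (ψ 0), z ∈ Ω := by
    rw [h.map_zero]; exact mem_closure_iff_frequently.1 (frontier_subset_closure hz₀)
  rw [← h.map_nhds (mem_ball_self h.pos), frequently_map] at hf
  obtain ⟨w, hw, hwb⟩ := (hf.and_eventually (ball_mem_nhds 0 h.pos)).exists
  rcases le_total 0 w.im with him | him
  · exact h.notMem_of_mapsTo_compl hΩo hU hwb him hw
  · refine h.neg.notMem_of_mapsTo_compl hΩo hL (w := -w) (by simpa using hwb) (by simpa using him) ?_
    simpa using hw

/-- When `Ω` lies on one side, the diameter parametrises `∂Ω`. -/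
lemma mem_frontier_of_im_eq_zero (h : IsStraightening Ω V z₀ ψ r) (hΩo : IsOpen Ω)
    (hU : MapsTo ψ (upperHalfDisc r) Ω)
    (hL : MapsTo (fun w => ψ (-w)) (upperHalfDisc r) (closure Ω)ᶜ) {w : ℂ}
    (hw : w ∈ ball (0 : ℂ) r) (him : w.im = 0) : ψ w ∈ frontier Ω := by
  rw [hΩo.frontier_eq]
  constructor
  · exact (h.diff w hw).continuousAt.continuousWithinAt.mem_closure
      (mem_closure_upperHalfDisc hw him.ge) hU
  · have := h.neg.notMem_of_mapsTo_compl hΩo hL (w := -w) (by simpa using hw) (by simp [him])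
    simpa using this

/-- Since `u` vanishes on the boundary, so does its tangential derivative. -/
lemma apply_tangent_eq_zero (h : IsStraightening Ω V z₀ ψ R) (hrR : r < R)
    (hU : MapsTo ψ (upperHalfDisc r) Ω) (huc : ContinuousOn u (closure Ω))
    (hud : ∀ z ∈ Ω, DifferentiableAt ℝ u z) (hGc : ContinuousOn G (closure Ω))
    (hGd : ∀ z ∈ Ω, G z = fderiv ℝ u z)
    (hu0 : ∀ w ∈ ball (0 : ℂ) r, w.im = 0 → u (ψ w) = 0)
    {x : ℂ} (hx : x ∈ ball (0 : ℂ) r) (him : x.im = 0) : G (ψ x) (deriv ψ x) = 0 := by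
  have hsub : {w : ℂ | w.im = 0} ∩ ball 0 r ⊆ closure (upperHalfDisc r) := by
    rintro w ⟨hw0, hw⟩
    exact mem_closure_upperHalfDisc hw (le_of_eq (Eq.symm hw0))
  have hd := (h.hasFDerivWithinAt_comp hrR hU huc hud hGc hGd
    (mem_closure_upperHalfDisc hx him.ge)).mono hsub
  have hmin : IsLocalMinOn (fun w => u (ψ w)) ({w | w.im = 0} ∩ ball 0 r) x := by
    filter_upwards [self_mem_nhdsWithin] with w hw
    rw [hu0 w hw.2 hw.1, hu0 x hx him]
  have hmem : ∀ y : ℂ, y.im = 0 → y ∈ posTangentConeAt ({w | w.im = 0} ∩ ball 0 r) x := by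
    intro y hy
    have hc : Tendsto (fun t : ℝ => x + t • y) (𝓝[>] 0) (𝓝 x) := by
      have : Continuous fun t : ℝ => x + t • y := by fun_prop
      simpa using (this.tendsto 0).mono_left nhdsWithin_le_nhds
    refine mem_posTangentConeAt_of_frequently_mem (Eventually.frequently ?_)
    filter_upwards [hc.eventually (isOpen_ball.mem_nhds hx)] with t ht
    exact ⟨by simp [him, hy], ht⟩
  have h1 := hmin.hasFDerivWithinAt_nonneg hd (hmem 1 (by simp))
  have h2 := hmin.hasFDerivWithinAt_nonneg hd (hmem (-1) (by simp))
  simp at h1 h2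
  linarith

/-- Differentiating `S (ψ t) = conj (ψ t)` along the real diameter. -/
lemma deriv_schwarz_mul (h : IsStraightening Ω V z₀ ψ r) (hVo : IsOpen V) {S : ℂ → ℂ}
    (hS : DifferentiableOn ℂ S V) (hSz : ∀ z ∈ frontier Ω, S z = (starRingEnd ℂ) z)
    (hfr : ∀ w ∈ ball (0 : ℂ) r, w.im = 0 → ψ w ∈ frontier Ω)
    {x : ℂ} (hx : x ∈ ball (0 : ℂ) r) (him : x.im = 0) :
    deriv S (ψ x) * deriv ψ x = (starRingEnd ℂ) (deriv ψ x) := by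
  obtain ⟨ξ, rfl⟩ : ∃ ξ : ℝ, x = ξ := ⟨x.re, Complex.ext (by simp) (by simp [him])⟩
  have h1 : HasDerivAt (fun t : ℝ => S (ψ t)) (deriv S (ψ ξ) * deriv ψ ξ) ξ := by
    have hSd := (hS.differentiableAt (hVo.mem_nhds (h.mem _ hx))).hasDerivAt
    exact (hSd.comp (ξ : ℂ) (h.diff _ hx).hasDerivAt).comp_ofReal
  have h2 : HasDerivAt (fun t : ℝ => (starRingEnd ℂ) (ψ t)) ((starRingEnd ℂ) (deriv ψ ξ)) ξ :=
    (Complex.conjCLE.toContinuousLinearMap.hasFDerivAt).comp_hasDerivAt ξ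
      (h.diff _ hx).hasDerivAt.comp_ofReal
  refine h1.unique (h2.congr_of_eventuallyEq ?_)
  filter_upwards [Complex.continuous_ofReal.continuousAt.preimage_mem_nhds
    (isOpen_ball.mem_nhds hx)] with t ht
  exact hSz _ (hfr _ ht (by simp))

/-- The identity on one-sided charts: `(u_x - i u_y)² + S'`, pulled back to the half-disc, vanishes
on the diameter and therefore throughout a smaller half-disc. -/
lemma exists_isOpen_of_one_sided (h : IsStraightening Ω V z₀ ψ R) (hr : 0 < r) (hrR : r < R)
    (hΩo : IsOpen Ω) (hVo : IsOpen V) (hU : MapsTo ψ (upperHalfDisc r) Ω)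
    (hL : MapsTo (fun w => ψ (-w)) (upperHalfDisc r) (closure Ω)ᶜ)
    (huc : ContinuousOn u (closure Ω)) (huh : HarmonicOnC u Ω) (hub : ∀ z ∈ frontier Ω, u z = 0)
    (hGc : ContinuousOn G (closure Ω)) (hGd : ∀ z ∈ Ω, G z = fderiv ℝ u z)
    (hG1 : ∀ z ∈ frontier Ω, ‖G z‖ = 1) {S : ℂ → ℂ}
    (hS : DifferentiableOn ℂ S V) (hSz : ∀ z ∈ frontier Ω, S z = (starRingEnd ℂ) z) :
    ∃ W : Set ℂ, IsOpen W ∧ z₀ ∈ W ∧ W ⊆ V ∧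
      ∀ z ∈ W ∩ Ω, complexGrad (fderiv ℝ u z) ^ 2 = -deriv S z := by
  have hs := h.mono hr hrR.le
  have hud : ∀ z ∈ Ω, DifferentiableAt ℝ u z := fun z hz =>
    (huh.1 z hz).differentiableAt two_ne_zero
  have hcl := h.mapsTo_closure hrR hU
  have hS' : DifferentiableOn ℂ (deriv S) V := hS.deriv hVo
  -- The diameter is known to parametrise `∂Ω` only for `‖w‖ < r`; halving the radius makes this hold
  -- at the endpoints of the diameter as well.
  set ρ := r / 2 with hρ
  have hρ0 : 0 < ρ := by positivity
  have hρr : ρ < r := by linarith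
  have hUρ : MapsTo ψ (upperHalfDisc ρ) Ω := hU.mono_left
    (inter_subset_inter_right _ (ball_subset_ball hρr.le))
  have hclρ := hs.mapsTo_closure hρr hUρ
  have hb : ∀ w ∈ closure (upperHalfDisc ρ), w ∈ ball (0 : ℂ) r := fun w hw =>
    closedBall_subset_ball hρr (closure_upperHalfDisc_subset ρ hw).2
  have hfr : ∀ w ∈ ball (0 : ℂ) r, w.im = 0 → ψ w ∈ frontier Ω := fun w hw him =>
    hs.mem_frontier_of_im_eq_zero hΩo hU hL hw him
  have hψc : ContinuousOn ψ (closure (upperHalfDisc ρ)) := fun w hw =>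
    (hs.diff w (hb w hw)).continuousAt.continuousWithinAt
  set g : ℂ → ℂ := fun w => complexGrad (G (ψ w)) ^ 2 + deriv S (ψ w) with hg
  have hgd : DiffContOnCl ℂ g (upperHalfDisc ρ) := by
    constructor
    · intro w hw
      have hwΩ := hUρ hw
      have hψd := hs.diff w (hb w (subset_closure hw))
      have h1 : DifferentiableAt ℂ (fun z => complexGrad (G z)) (ψ w) := by
        refine (differentiableAt_complexGrad_fderiv hΩo huh hwΩ).congr_of_eventuallyEq ?_
        filter_upwards [hΩo.mem_nhds hwΩ] with z hz
        rw [hGd z hz]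
      have h2 : DifferentiableAt ℂ (deriv S) (ψ w) :=
        hS'.differentiableAt (hVo.mem_nhds (hs.mem w (hb w (subset_closure hw))))
      exact (((h1.comp w hψd).pow 2).add (h2.comp w hψd)).differentiableWithinAt
    · have h1 : ContinuousOn (fun w => G (ψ w)) (closure (upperHalfDisc ρ)) :=
        hGc.comp hψc hclρ
      have h2 : ContinuousOn (fun w => deriv S (ψ w)) (closure (upperHalfDisc ρ)) :=
        hS'.continuousOn.comp hψc fun w hw => hs.mem w (hb w hw)
      have h3 : ContinuousOn (fun w => complexGrad (G (ψ w))) (closure (upperHalfDisc ρ)) := by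
        unfold complexGrad
        have e1 : ContinuousOn (fun w => G (ψ w) 1) (closure (upperHalfDisc ρ)) :=
          h1.clm_apply continuousOn_const
        have e2 : ContinuousOn (fun w => G (ψ w) Complex.I) (closure (upperHalfDisc ρ)) :=
          h1.clm_apply continuousOn_const
        exact (Complex.continuous_ofReal.comp_continuousOn e1).sub
          (continuousOn_const.mul (Complex.continuous_ofReal.comp_continuousOn e2))
      exact (h3.pow 2).add h2
  have hg0 : ∀ w ∈ closure (upperHalfDisc ρ), w.im = 0 → g w = 0 := by
    intro w hw him
    have hwr := hb w hw
    refine complexGrad_sq_add_eq_zero (hG1 _ (hfr w hwr him)) (hs.deriv_ne w hwr) ?_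
      (hs.deriv_schwarz_mul hVo hS hSz hfr hwr him)
    exact h.apply_tangent_eq_zero hrR hU huc hud hGc hGd
      (fun w hw him => hub _ (hfr w hw him)) hwr him
  have hnhds : ψ '' ball 0 (ρ / 2) ∈ 𝓝 z₀ := by
    rw [← h.map_zero, ← h.map_nhds (mem_ball_self h.pos)]
    exact image_mem_map (ball_mem_nhds 0 (by positivity))
  refine ⟨interior (ψ '' ball 0 (ρ / 2)), isOpen_interior, mem_interior_iff_mem_nhds.2 hnhds,
    ?_, ?_⟩
  · rintro z hz
    obtain ⟨w, hw, rfl⟩ := interior_subset hz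
    exact hs.mem w (ball_subset_ball (by linarith) hw)
  · rintro z ⟨hz, hzΩ⟩
    obtain ⟨w, hw, rfl⟩ := interior_subset hz
    have hwr : w ∈ ball (0 : ℂ) r := ball_subset_ball (by linarith) hw
    have him : 0 < w.im := by
      by_contra hcon
      refine hs.neg.notMem_of_mapsTo_compl hΩo hL (w := -w) (by simpa using hwr)
        (by simpa using hcon) ?_
      simpa using hzΩ
    have := eq_zero_of_eq_zero_on_diameter hgd hg0 ⟨him, hw⟩
    rw [← hGd _ hzΩ]
    exact eq_neg_of_add_eq_zero_left this

end IsStraightening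

/-- Proposition 4.1: if `S` is a Schwarz function for `∂Ω` (holomorphic near `∂Ω` and
equal to `conj z` there) and `F = (uₓ - i u_y)/2` is the holomorphic derivative of the
roof function, then `4F² = -S′` near `∂Ω` inside `Ω`; in particular `-4F²` continues `S′`
analytically throughout `Ω`. -/
theorem roof_function_schwarz_function (Ω : Set ℂ) (hΩo : IsOpen Ω)
    (hΩc : IsConnected Ω) (hΩne : Ω ≠ univ)
    (u : ℂ → ℝ) (hu : IsRoofFunctionC Ω u)
    (F : ℂ → ℂ)
    (hF : ∀ z : ℂ, F z =
      (((fderiv ℝ u z 1 : ℝ) : ℂ) - Complex.I * ((fderiv ℝ u z Complex.I : ℝ) : ℂ)) / 2)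
    (V : Set ℂ) (hVo : IsOpen V) (hV : frontier Ω ⊆ V)
    (S : ℂ → ℂ) (hS : DifferentiableOn ℂ S V)
    (hSz : ∀ z ∈ frontier Ω, S z = (starRingEnd ℂ) z) :
    ∃ W : Set ℂ, IsOpen W ∧ frontier Ω ⊆ W ∧ W ⊆ V ∧
      ∀ z ∈ W ∩ Ω, 4 * (F z) ^ 2 = -deriv S z := by
  obtain ⟨huc, huh, hup, hub, G, hGc, hGd, hG1⟩ := hu
  have hu0 : ∀ z ∈ closure Ω, 0 ≤ u z := by
    intro z hz
    by_cases hzΩ : z ∈ Ω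
    · exact (hup z hzΩ).le
    · exact (hub z (hΩo.frontier_eq ▸ ⟨hz, hzΩ⟩)).ge
  have hud : ∀ z ∈ Ω, DifferentiableAt ℝ u z := fun z hz =>
    (huh.1 z hz).differentiableAt two_ne_zero
  have hloc : ∀ z₀ ∈ frontier Ω, ∃ W : Set ℂ, IsOpen W ∧ z₀ ∈ W ∧ W ⊆ V ∧
      ∀ z ∈ W ∩ Ω, complexGrad (fderiv ℝ u z) ^ 2 = -deriv S z := by
    intro z₀ hz₀
    obtain ⟨ψ, R, h⟩ := exists_isStraightening hVo hS hSz hz₀ (hV hz₀)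
    have hR := h.pos
    have hr : 0 < R / 2 := by positivity
    have hrR : R / 2 < R := by linarith
    have hs := h.mono hr hrR.le
    rcases hs.subset_or_disjoint hΩo with hU | hU <;>
      rcases hs.neg.subset_or_disjoint hΩo with hL | hL
    · have := h.not_both_sides hr hrR hU hL huc hud hGc hGd hu0 (hub z₀ hz₀)
      have h1 := hG1 z₀ hz₀
      simp [this] at h1
    · exact h.exists_isOpen_of_one_sided hr hrR hΩo hVo hU hL huc huh hub hGc hGd hG1
        hS hSz
    · exact h.neg.exists_isOpen_of_one_sided hr hrR hΩo hVo hL (by simpa using hU)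
        huc huh hub hGc hGd hG1 hS hSz
    · exact (hs.not_disjoint_both hΩo hz₀ hU hL).elim
  choose! W hWo hzW hWV hW using hloc
  refine ⟨⋃ z ∈ frontier Ω, W z, isOpen_biUnion hWo, fun z hz => mem_biUnion hz (hzW z hz),
    iUnion₂_subset hWV, ?_⟩
  rintro z ⟨hz, hzΩ⟩
  obtain ⟨z₀, hz₀, hz⟩ := mem_iUnion₂.1 hz
  rw [← hW z₀ hz₀ z ⟨hz, hzΩ⟩, hF, complexGrad]
  ring
end
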